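/- arXiv:0906.2729 — 3 statements merged into one kernel-verified Lean document; each statement's English description precedes it below -/
import Mathlib

section
/- Let L = (α_{kj})_{1≤k,j≤n} be an n×n integer matrix with det L ≠ 0, let a = (a₁,…,a_n) ∈ (ℂ*)ⁿ, and let f(z) = 1 + Σ_{k=1}^n a_k ∏_{j=1}^n z_j^{α_{kj}}, whose Newton polytope Δ_f is the simplex with vertices 0, α₁, …, α_n (the rows of L). Then the number of connected components of the complement in the torus Tⁿ = (ℝ/2πℤ)ⁿ of the closure of the coamoeba of V_f equals |det L| = n! · Vol(Δ_f). (Lemma 3.3(ii).) -/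
open Complex
open scoped ENNReal

open MeasureTheory in
lemma coam_volume_corner (n : ℕ) : ∀ r : ℝ, 0 ≤ r →
    volume {x : Fin n → ℝ | (∀ i, 0 ≤ x i) ∧ ∑ i, x i ≤ r} =
      ENNReal.ofReal (r ^ n / n.factorial) := by
  induction n with
  | zero =>
    intro r hr
    have : {x : Fin 0 → ℝ | (∀ i, 0 ≤ x i) ∧ ∑ i, x i ≤ r} = Set.univ := by
      ext x; simp [hr]
    rw [this, volume_pi, Measure.pi_univ]
    simp
  | succ n ih =>
    intro r hr
    set T : Set (ℝ × (Fin n → ℝ)) :=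
      {p | 0 ≤ p.1 ∧ (∀ i, 0 ≤ p.2 i) ∧ p.1 + ∑ i, p.2 i ≤ r} with hT
    have hTm : MeasurableSet T := by
      have h1 : IsClosed T := by
        have : T = {p | 0 ≤ p.1} ∩ ((⋂ i, {p | 0 ≤ p.2 i}) ∩ {p | p.1 + ∑ i, p.2 i ≤ r}) := by
          ext p; simp [hT]
        rw [this]
        refine (isClosed_le (by fun_prop) (by fun_prop)).inter
          ((isClosed_iInter fun i => isClosed_le (by fun_prop) (by fun_prop)).inter
            (isClosed_le (by fun_prop) (by fun_prop)))
      exact h1.measurableSet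
    have h0 : {x : Fin (n+1) → ℝ | (∀ i, 0 ≤ x i) ∧ ∑ i, x i ≤ r} =
        (MeasurableEquiv.piFinSuccAbove (fun _ => ℝ) 0) ⁻¹' T := by
      ext x
      simp [hT, Fin.forall_fin_succ, Fin.sum_univ_succ, MeasurableEquiv.piFinSuccAbove,
        Fin.tail, and_assoc]
    rw [h0, (volume_preserving_piFinSuccAbove (fun _ : Fin (n+1) => ℝ) 0).measure_preimage
      hTm.nullMeasurableSet]
    rw [Measure.volume_eq_prod, Measure.prod_apply hTm]
    have h1 : ∀ t : ℝ, volume (Prod.mk t ⁻¹' T) =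
        (Set.Icc 0 r).indicator (fun t => ENNReal.ofReal ((r - t) ^ n / n.factorial)) t := by
      intro t
      by_cases ht : t ∈ Set.Icc 0 r
      · rw [Set.indicator_of_mem ht, ← ih (r - t) (by linarith [ht.2])]
        congr 1
        ext x
        simp only [hT, Set.mem_preimage, Set.mem_ofPred_eq, ht.1, true_and]
        refine and_congr_right fun _ => ?_
        constructor <;> intro h <;> linarith
      · rw [Set.indicator_of_notMem ht]
        convert measure_empty (μ := volume)
        ext x
        simp only [hT, Set.mem_preimage, Set.mem_ofPred_eq, Set.mem_empty_iff_false, iff_false]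
        rintro ⟨h1, h2, h3⟩
        exact ht ⟨h1, by linarith [Finset.sum_nonneg (s := Finset.univ) (fun i _ => h2 i)]⟩
    simp_rw [h1]
    rw [lintegral_indicator measurableSet_Icc]
    rw [← ofReal_integral_eq_lintegral_ofReal]
    · congr 1
      rw [integral_Icc_eq_integral_Ioc, ← intervalIntegral.integral_of_le hr]
      have := intervalIntegral.integral_comp_sub_left (a := 0) (b := r)
        (fun t : ℝ => t ^ n / (n.factorial : ℝ)) r
      rw [this]
      simp only [sub_self, sub_zero, intervalIntegral.integral_div, integral_pow]
      rw [Nat.factorial_succ]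
      push_cast
      field_simp
      simp
    · apply ContinuousOn.integrableOn_Icc
      fun_prop
    · filter_upwards [ae_restrict_mem measurableSet_Icc] with t ht
      have : 0 ≤ r - t := by linarith [ht.2]
      simp only [Pi.zero_apply]
      positivity

lemma coam_convexHull_corner (n : ℕ) :
    convexHull ℝ (insert 0 (Set.range fun (k : Fin n) => (Pi.single k 1 : Fin n → ℝ))) =
    {x : Fin n → ℝ | (∀ i, 0 ≤ x i) ∧ ∑ i, x i ≤ 1} := by
  apply Set.Subset.antisymm
  · apply convexHull_min
    · rintro x (rfl | ⟨k, rfl⟩)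
      · simp
      · refine ⟨fun i => ?_, by simp⟩
        by_cases h : i = k
        · subst h; simp
        · simp [h]
    · intro x hx y hy s t hs ht hst
      refine ⟨fun i => ?_, ?_⟩
      · have := hx.1 i; have := hy.1 i
        simp only [Pi.add_apply, Pi.smul_apply, smul_eq_mul]
        positivity
      · simp only [Pi.add_apply, Pi.smul_apply, smul_eq_mul, Finset.sum_add_distrib,
          ← Finset.mul_sum]
        nlinarith [hx.2, hy.2]
  · rintro x ⟨h0, h1⟩
    have := (convex_convexHull ℝ (insert 0 (Set.range fun (k : Fin n) =>
      (Pi.single k 1 : Fin n → ℝ)))).sum_mem (t := (Finset.univ : Finset (Option (Fin n))))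
      (w := fun o => o.elim (1 - ∑ i, x i) x) (z := fun o => o.elim 0 (fun k => Pi.single k 1))
      (by rintro (_|i) _ <;> simp [h0, h1]) (by simp [Fintype.sum_option])
      (by
        rintro (_|i) _
        · exact subset_convexHull _ _ (by simp)
        · exact subset_convexHull _ _ (by simp))
    convert this
    ext j
    simp [Fintype.sum_option, Finset.sum_apply, Pi.single_apply]

open MeasureTheory in
lemma coam_volume_simplex (n : ℕ) (L : Matrix (Fin n) (Fin n) ℤ) :
    (L.det.natAbs : ℝ≥0∞) = (n.factorial : ℝ≥0∞) * volume
      (convexHull ℝ (insert 0 (Set.range fun (k : Fin n) (j : Fin n) => (L k j : ℝ)))) := by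
  set M : Matrix (Fin n) (Fin n) ℝ := (L.map (Int.cast : ℤ → ℝ)).transpose with hM
  have h1 : (insert 0 (Set.range fun (k : Fin n) (j : Fin n) => (L k j : ℝ))) =
      (Matrix.toLin' M) '' (insert 0 (Set.range fun (k : Fin n) =>
        (Pi.single k 1 : Fin n → ℝ))) := by
    rw [Set.image_insert_eq, map_zero, ← Set.range_comp]
    congr 2
    ext k j
    simp [hM]
  rw [h1, ← LinearMap.image_convexHull, coam_convexHull_corner,
    Measure.addHaar_image_linearMap, coam_volume_corner n 1 zero_le_one]
  have hdet : LinearMap.det (Matrix.toLin' M) = (L.det : ℝ) := by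
    rw [LinearMap.det_toLin', hM, Matrix.det_transpose]
    exact (Int.cast_det L).symm
  rw [hdet, ← Int.cast_abs, Int.abs_eq_natAbs]
  have : ENNReal.ofReal ((L.det.natAbs : ℤ) : ℝ) = (L.det.natAbs : ℝ≥0∞) := by
    simp only [Int.cast_natCast, ENNReal.ofReal_natCast]
  rw [this, one_pow, mul_left_comm, ← ENNReal.ofReal_natCast n.factorial,
    ← ENNReal.ofReal_mul (by positivity), mul_one_div_cancel (by positivity)]
  simp

lemma coam_index (n : ℕ) (L : Matrix (Fin n) (Fin n) ℤ) (hL : L.det ≠ 0) :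
    Nat.card ((Fin n → ℤ) ⧸ LinearMap.range (Matrix.toLin' L)) = L.det.natAbs := by
  have hinj : Function.Injective (Matrix.toLin' L) := by
    have := Matrix.mulVec_injective_of_det_ne_zero hL
    exact this
  rw [← Submodule.natAbs_det_equiv _ (LinearEquiv.ofInjective _ hinj)]
  congr 1
  rw [← LinearMap.det_toLin' L]
  rfl

/-- The open convex polytope of arguments contained in a common open half plane with `1`. -/
def coamCell (n : ℕ) : Set (Fin n → ℝ) :=
  {y | (∀ k, |y k| < Real.pi) ∧ ∀ j k, |y j - y k| < Real.pi}

/-- `y` is the argument vector of a zero of `1 + w_1 + ... + w_n`. -/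
def coamH {n : ℕ} (y : Fin n → ℝ) : Prop :=
  ∃ t : Fin n → ℝ, (∀ k, 0 < t k) ∧ 1 + ∑ k, (t k : ℂ) * exp (y k * I) = 0

lemma coamCell_isOpen (n : ℕ) : IsOpen (coamCell n) := by
  have : coamCell n = (⋂ k, {y | |y k| < Real.pi}) ∩ ⋂ j, ⋂ k, {y | |y j - y k| < Real.pi} := by
    ext y; simp [coamCell]
  rw [this]
  refine (isOpen_iInter_of_finite fun k => isOpen_lt (by fun_prop) (by fun_prop)).inter
    (isOpen_iInter_of_finite fun j => isOpen_iInter_of_finite fun k =>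
      isOpen_lt (by fun_prop) (by fun_prop))

lemma coamCell_zero_mem (n : ℕ) : (0 : Fin n → ℝ) ∈ coamCell n := by
  rw [coamCell, Set.mem_ofPred_eq]
  simp [Real.pi_pos]

lemma coamCell_isPreconnected (n : ℕ) : IsPreconnected (coamCell n) := by
  have : StarConvex ℝ 0 (coamCell n) := by
    rw [starConvex_zero_iff]
    intro x hx a ha0 ha1
    have key : ∀ r : ℝ, |r| < Real.pi → |a * r| < Real.pi := by
      intro r hr
      rw [abs_mul, abs_of_nonneg ha0]
      nlinarith [abs_nonneg r]
    rw [coamCell, Set.mem_ofPred_eq] at hx ⊢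
    refine ⟨fun k => key _ (hx.1 k), fun j k => ?_⟩
    simp only [Pi.smul_apply, smul_eq_mul]
    rw [← mul_sub]
    exact key _ (hx.2 j k)
  exact (this.isPathConnected (coamCell_zero_mem n)).isConnected.isPreconnected

lemma coamCell_not_H {n : ℕ} {y : Fin n → ℝ} (hy : y ∈ coamCell n) : ¬ coamH y := by
  rintro ⟨t, ht, h⟩
  obtain ⟨φ, hφ0, hφ⟩ : ∃ φ : ℝ, |φ| < Real.pi / 2 ∧ ∀ k, |y k - φ| < Real.pi / 2 := by
    let s : Option (Fin n) → ℝ := fun o => o.elim 0 y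
    have hs : ∀ i j, |s i - s j| < Real.pi := by
      rintro (_|i) (_|j)
      · simp [s, Real.pi_pos]
      · simpa [s] using hy.1 j
      · simpa [s] using hy.1 i
      · simpa [s] using hy.2 i j
    obtain ⟨M, -, hM⟩ := Finset.exists_max_image (Finset.univ : Finset (Option (Fin n))) s
      ⟨none, by simp⟩
    obtain ⟨m, -, hm⟩ := Finset.exists_min_image (Finset.univ : Finset (Option (Fin n))) s
      ⟨none, by simp⟩
    have hMm := abs_lt.1 (hs M m)
    have key : ∀ i, |s i - (s M + s m) / 2| < Real.pi / 2 := by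
      intro i
      have h1 := hM i (by simp)
      have h2 := hm i (by simp)
      rw [abs_lt]
      constructor <;> linarith
    refine ⟨(s M + s m) / 2, ?_, fun k => key (some k)⟩
    have := key none
    simpa only [s, Option.elim, zero_sub, abs_neg] using this
  have h2 : (exp (-φ * I) * (1 + ∑ k, (t k : ℂ) * exp (y k * I))).re = 0 := by rw [h]; simp
  have h3 : (exp (-φ * I) * (1 + ∑ k, (t k : ℂ) * exp (y k * I))) =
      exp ((-φ : ℝ) * I) + ∑ k, (t k : ℂ) * exp ((y k - φ : ℝ) * I) := by
    rw [mul_add, mul_one, Finset.mul_sum]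
    congr 1
    · push_cast; rfl
    · refine Finset.sum_congr rfl fun k _ => ?_
      rw [mul_left_comm, ← exp_add]
      congr 2
      push_cast; ring
  rw [h3, add_re, re_sum] at h2
  simp only [re_ofReal_mul, exp_ofReal_mul_I_re] at h2
  have h4 : 0 < Real.cos (-φ) := Real.cos_pos_of_mem_Ioo
    ⟨by linarith [(abs_lt.1 hφ0).2], by linarith [(abs_lt.1 hφ0).1]⟩
  have h5 : 0 ≤ ∑ k, t k * Real.cos (y k - φ) := Finset.sum_nonneg fun k _ =>
    mul_nonneg (ht k).le (Real.cos_pos_of_mem_Ioo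
      ⟨by linarith [(abs_lt.1 (hφ k)).1], by linarith [(abs_lt.1 (hφ k)).2]⟩).le
  linarith

lemma coam_exp_add (r : ℝ) (m : ℤ) :
    exp (((r + 2 * Real.pi * m : ℝ) : ℂ) * I) = exp (r * I) := by
  rw [Complex.exp_eq_exp_iff_exists_int]
  exact ⟨m, by push_cast; ring⟩

lemma coamH_add {n : ℕ} {y : Fin n → ℝ} (m : Fin n → ℤ) :
    coamH (fun k => y k + 2 * Real.pi * m k) ↔ coamH y := by
  unfold coamH
  simp only [coam_exp_add]

open Filter Topology in
lemma coam_closure {n : ℕ} {y : Fin n → ℝ} (c0 : ℝ) (c : Fin n → ℝ) (hc0 : 0 ≤ c0)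
    (hc : ∀ k, 0 ≤ c k) (p : Fin n) (hp : 0 < c p)
    (h : (c0 : ℂ) + ∑ k, (c k : ℂ) * exp (y k * I) = 0) :
    y ∈ closure {y | coamH y} := by
  set v : ℂ := 1 + ∑ k ∈ Finset.univ.erase p, exp (y k * I) with hv
  set q : ℂ := v / (c p * exp (y p * I)) with hq
  have hcp : (c p : ℂ) ≠ 0 := by exact_mod_cast hp.ne'
  let Q : ℝ → ℂ := fun δ => 1 - δ * q
  have hQ : Continuous Q := by fun_prop
  have hQ0 : Q 0 = 1 := by simp [Q]
  let Y : ℝ → Fin n → ℝ := fun δ => Function.update y p (y p + (Q δ).arg)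
  have hY : Tendsto Y (𝓝[>] 0) (𝓝 y) := by
    have h1 : Tendsto (fun δ => (Q δ).arg) (𝓝 0) (𝓝 0) := by
      have h2 : ContinuousAt Complex.arg (Q 0) := Complex.continuousAt_arg (by simp [hQ0])
      have := (ContinuousAt.comp h2 hQ.continuousAt).tendsto
      simpa [hQ0, Function.comp_def] using this
    have h3 : Tendsto Y (𝓝 0) (𝓝 (Function.update y p (y p + 0))) :=
      tendsto_const_nhds.update p (tendsto_const_nhds.add h1)
    rw [add_zero, Function.update_eq_self] at h3
    exact h3.mono_left nhdsWithin_le_nhds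
  refine mem_closure_of_tendsto hY ?_
  have hne : ∀ᶠ δ in 𝓝[>] (0 : ℝ), Q δ ≠ 0 :=
    (hQ.continuousAt.eventually_ne (by simp [hQ0])).filter_mono nhdsWithin_le_nhds
  filter_upwards [hne, self_mem_nhdsWithin] with δ hδ hδ0
  have hδ0 : 0 < δ := hδ0
  have hd : 0 < c0 + δ := by linarith
  refine ⟨fun k => (if k = p then c p * ‖Q δ‖ else c k + δ) / (c0 + δ), fun k => ?_, ?_⟩
  · have := hc k
    have : 0 < ‖Q δ‖ := norm_pos_iff.2 hδ
    dsimp only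
    split_ifs <;> positivity
  · have hdc : ((c0 : ℂ) + δ) ≠ 0 := by exact_mod_cast hd.ne'
    rw [← Finset.add_sum_erase _ _ (Finset.mem_univ p)] at h ⊢
    have e1 : ∀ k ∈ Finset.univ.erase p,
        ((((if k = p then c p * ‖Q δ‖ else c k + δ) / (c0 + δ) : ℝ) : ℂ) * exp (Y δ k * I)) =
        ((c k : ℂ) * exp (y k * I) + δ * exp (y k * I)) / (c0 + δ) := by
      intro k hk
      have hk : k ≠ p := Finset.ne_of_mem_erase hk
      simp only [hk, if_false, Y, Function.update_of_ne hk]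
      push_cast
      ring
    have e2 : ((((if p = p then c p * ‖Q δ‖ else c p + δ) / (c0 + δ) : ℝ) : ℂ) * exp (Y δ p * I)) =
        ((c p : ℂ) * exp (y p * I) - δ * v) / (c0 + δ) := by
      simp only [if_true, Y, Function.update_self]
      have e3 : (‖Q δ‖ : ℂ) * exp ((Q δ).arg * I) = Q δ := Complex.norm_mul_exp_arg_mul_I _
      have e4 : (c p : ℂ) * exp (y p * I) * Q δ = (c p : ℂ) * exp (y p * I) - δ * v := by
        simp only [Q, hq]
        field_simp [hcp, Complex.exp_ne_zero]
      rw [← e4]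
      push_cast
      rw [add_mul, Complex.exp_add]
      linear_combination ((c p : ℂ) * exp (y p * I) / (c0 + δ)) * e3
    rw [Finset.sum_congr rfl e1, e2, ← Finset.sum_div, Finset.sum_add_distrib, ← Finset.mul_sum]
    have e5 : ∑ k ∈ Finset.univ.erase p, exp (y k * I) = v - 1 := by rw [hv]; ring
    rw [e5]
    generalize (∑ k ∈ Finset.univ.erase p, (c k : ℂ) * exp (y k * I)) = S at h ⊢
    generalize (c p : ℂ) * exp (y p * I) = R at h ⊢
    field_simp
    linear_combination h

lemma coam_not_cell {n : ℕ} {y : Fin n → ℝ} (h1 : ∀ k, -Real.pi < y k) (h2 : ∀ k, y k ≤ Real.pi)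
    (hy : y ∉ coamCell n) : y ∈ closure {y | coamH y} := by
  by_cases hA : ∃ k, y k = Real.pi
  · obtain ⟨k, hk⟩ := hA
    refine coam_closure 1 (Pi.single k 1) zero_le_one ?_ k (by simp) ?_
    · intro i
      by_cases h : i = k
      · subst h; simp
      · simp [h]
    · rw [Finset.sum_eq_single k]
      · simp [hk]
      · intro b _ hb; simp [hb]
      · simp
  · push Not at hA
    have h2' : ∀ k, y k < Real.pi := fun k => lt_of_le_of_ne (h2 k) (hA k)
    have : ∃ j k, Real.pi ≤ y j - y k := by
      by_contra! hcon
      refine hy ⟨fun k => abs_lt.2 ⟨h1 k, h2' k⟩, fun j k => abs_lt.2 ⟨?_, hcon j k⟩⟩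
      linarith [hcon k j]
    obtain ⟨j, k, hjk⟩ := this
    have hjk' : j ≠ k := by
      rintro rfl; linarith [Real.pi_pos]
    have hb : 0 < Real.sin (y j) := Real.sin_pos_of_pos_of_lt_pi (by linarith [h1 k]) (h2' j)
    have hg : Real.sin (y k) < 0 := Real.sin_neg_of_neg_of_neg_pi_lt (by linarith [h2' j]) (h1 k)
    have hd : Real.sin (y j - y k) ≤ 0 := by
      have := Real.sin_nonneg_of_nonneg_of_le_pi (x := y j - y k - Real.pi) (by linarith)
        (by linarith [h2' j, h1 k])
      rw [Real.sin_sub_pi] at this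
      linarith
    refine coam_closure (- Real.sin (y j - y k))
      (Pi.single j (-Real.sin (y k)) + Pi.single k (Real.sin (y j))) (by linarith) ?_ k ?_ ?_
    · intro i
      simp only [Pi.add_apply, Pi.single_apply]
      split_ifs <;> linarith
    · simp [hjk'.symm, hb]
    · have : ∀ i, (((Pi.single j (-Real.sin (y k)) + Pi.single k (Real.sin (y j)) : Fin n → ℝ) i
          : ℝ) : ℂ) * exp (y i * I) = (if i = j then ((-Real.sin (y k) : ℝ) : ℂ) * exp (y i * I) else 0)
          + if i = k then ((Real.sin (y j) : ℝ) : ℂ) * exp (y i * I) else 0 := by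
        intro i
        simp only [Pi.add_apply, Pi.single_apply]
        split_ifs <;> simp [add_mul]
      simp only [this, Finset.sum_add_distrib, Finset.sum_ite_eq', Finset.mem_univ, if_true]
      rw [Real.sin_sub]
      apply Complex.ext
      · simp only [add_re, re_ofReal_mul, exp_ofReal_mul_I_re, ofReal_re, zero_re]
        ring
      · simp only [add_im, im_ofReal_mul, exp_ofReal_mul_I_im, ofReal_im, zero_im]
        ring

lemma coam_closure_iff {n : ℕ} (y : Fin n → ℝ) :
    y ∈ (closure {y : Fin n → ℝ | coamH y})ᶜ ↔
      ∃ m : Fin n → ℤ, (fun k => y k - 2 * Real.pi * m k) ∈ coamCell n := by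
  have hsub : ∀ m : Fin n → ℤ, Continuous fun (y : Fin n → ℝ) k => y k - 2 * Real.pi * m k := by
    intro m; fun_prop
  have hadd : ∀ m : Fin n → ℤ, Continuous fun (y : Fin n → ℝ) k => y k + 2 * Real.pi * m k := by
    intro m; fun_prop
  constructor
  · intro hy
    by_contra! hcon
    apply hy
    let m : Fin n → ℤ := fun k => toIocDiv Real.two_pi_pos (-Real.pi) (y k)
    have hm : ∀ k, y k - 2 * Real.pi * m k ∈ Set.Ioc (-Real.pi) Real.pi := by
      intro k
      have := sub_toIocDiv_zsmul_mem_Ioc Real.two_pi_pos (-Real.pi) (y k)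
      rw [zsmul_eq_mul] at this
      have e : y k - 2 * Real.pi * m k =
          y k - (toIocDiv Real.two_pi_pos (-Real.pi) (y k) : ℝ) * (2 * Real.pi) := by
        simp only [m]
        ring
      rw [e]
      exact ⟨this.1, by linarith [this.2]⟩
    have h1 := coam_not_cell (fun k => (hm k).1) (fun k => (hm k).2) (hcon m)
    have h2 := image_closure_subset_closure_image (hadd m) (Set.mem_image_of_mem _ h1)
    have h3 : (fun (y : Fin n → ℝ) k => y k + 2 * Real.pi * m k) '' {y | coamH y} ⊆
        {y | coamH y} := by
      rintro _ ⟨z, hz, rfl⟩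
      exact (coamH_add m).2 hz
    have h4 := closure_mono h3 h2
    simpa using h4
  · rintro ⟨m, hm⟩
    have ho : IsOpen ((fun (y : Fin n → ℝ) k => y k - 2 * Real.pi * m k) ⁻¹' coamCell n) :=
      (coamCell_isOpen n).preimage (hsub m)
    intro hy
    rw [mem_closure_iff] at hy
    obtain ⟨z, hz1, hz2⟩ := hy _ ho hm
    refine coamCell_not_H hz1 ?_
    have := (coamH_add (y := fun k => z k - 2 * Real.pi * m k) m).1
    simp only [sub_add_cancel] at this
    exact this hz2

lemma coam_components {X ι : Type*} [TopologicalSpace X] (Ω : Set X) (C : ι → Set X)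
    (hU : Ω = ⋃ i, C i) (ho : ∀ i, IsOpen (C i)) (hc : ∀ i, IsPreconnected (C i))
    (hne : ∀ i, (C i).Nonempty)
    (hd : ∀ i j, (C i ∩ C j).Nonempty → C i = C j) :
    {D | ∃ θ ∈ Ω, D = connectedComponentIn Ω θ} = Set.range C := by
  have key : ∀ i, ∀ θ ∈ C i, connectedComponentIn Ω θ = C i := by
    intro i θ hθ
    have hsub : C i ⊆ Ω := by rw [hU]; exact Set.subset_iUnion C i
    apply Set.Subset.antisymm
    · have h1 : IsPreconnected (connectedComponentIn Ω θ) := isPreconnected_connectedComponentIn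
      have hV : IsOpen (⋃ j ∈ {j | C j ≠ C i}, C j) :=
        isOpen_biUnion fun j _ => ho j
      refine h1.subset_left_of_subset_union (ho i) hV ?_ ?_ ⟨θ, mem_connectedComponentIn (hsub hθ), hθ⟩
      · rw [Set.disjoint_iff_inter_eq_empty]
        by_contra hcon
        obtain ⟨x, hx1, hx2⟩ := Set.nonempty_iff_ne_empty.2 hcon
        simp only [Set.mem_iUnion] at hx2
        obtain ⟨j, hj, hx2⟩ := hx2
        exact hj (hd j i ⟨x, hx2, hx1⟩)
      · intro x hx
        have hx' := connectedComponentIn_subset Ω θ hx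
        rw [hU, Set.mem_iUnion] at hx'
        obtain ⟨j, hj⟩ := hx'
        by_cases h : C j = C i
        · left; rw [← h]; exact hj
        · right; simp only [Set.mem_iUnion]; exact ⟨j, h, hj⟩
    · exact (hc i).subset_connectedComponentIn hθ hsub
  ext D
  constructor
  · rintro ⟨θ, hθ, rfl⟩
    have hθ' := hθ
    rw [hU, Set.mem_iUnion] at hθ'
    obtain ⟨i, hi⟩ := hθ'
    exact ⟨i, (key i θ hi).symm⟩
  · rintro ⟨i, rfl⟩
    obtain ⟨θ, hθ⟩ := hne i
    exact ⟨θ, by rw [hU]; exact Set.mem_iUnion.2 ⟨i, hθ⟩, (key i θ hθ).symm⟩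

lemma coam_coe_eq (x y : ℝ) : (x : AddCircle (2 * Real.pi)) = (y : AddCircle (2 * Real.pi)) ↔
    ∃ m : ℤ, x = y + 2 * Real.pi * m := by
  rw [QuotientAddGroup.eq_iff_sub_mem, AddSubgroup.mem_zmultiples_iff]
  refine exists_congr fun m => ?_
  rw [zsmul_eq_mul]
  constructor <;> intro h <;> linarith

lemma coam_mem_iff (n : ℕ) (L : Matrix (Fin n) (Fin n) ℤ)
    (a : Fin n → ℂ) (ha : ∀ k, a k ≠ 0) (Li : Matrix (Fin n) (Fin n) ℝ)
    (h1 : L.map (Int.cast : ℤ → ℝ) * Li = 1) (x : Fin n → ℝ) :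
    (∃ z : Fin n → ℂ,
      (∀ j, z j ≠ 0) ∧ 1 + ∑ k, a k * ∏ j, z j ^ (L k j) = 0 ∧
      ∀ j, (x j : AddCircle (2 * Real.pi)) = ((z j).arg : AddCircle (2 * Real.pi))) ↔
    coamH (fun k => (a k).arg + ∑ j, L k j * x j) := by
  have hmono : ∀ (r : Fin n → ℝ) (k : Fin n),
      a k * ∏ j, (exp ((r j : ℂ) + x j * I)) ^ (L k j) =
      ((‖a k‖ * Real.exp (∑ j, L k j * r j) : ℝ) : ℂ) *
        exp (((a k).arg + ∑ j, L k j * x j : ℝ) * I) := by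
    intro r k
    conv_lhs => rw [← Complex.norm_mul_exp_arg_mul_I (a k)]
    have : ∏ j, (exp ((r j : ℂ) + x j * I)) ^ (L k j) =
        exp (((∑ j, L k j * r j : ℝ) : ℂ) + ((∑ j, L k j * x j : ℝ) : ℂ) * I) := by
      push_cast
      rw [Finset.sum_mul, ← Finset.sum_add_distrib, Complex.exp_sum]
      refine Finset.prod_congr rfl fun j _ => ?_
      rw [← Complex.exp_int_mul]
      congr 1; ring
    rw [this]
    push_cast
    rw [Complex.exp_add, add_mul, Complex.exp_add]
    ring
  constructor
  · rintro ⟨z, hz0, hz, hx⟩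
    have hzx : ∀ j, z j = exp (((Real.log ‖z j‖ : ℝ) : ℂ) + x j * I) := by
      intro j
      obtain ⟨m, hm⟩ := (coam_coe_eq _ _).1 (hx j)
      rw [hm, Complex.exp_add, coam_exp_add, ← Complex.ofReal_exp,
        Real.exp_log (norm_pos_iff.2 (hz0 j)), Complex.norm_mul_exp_arg_mul_I]
    refine ⟨fun k => ‖a k‖ * Real.exp (∑ j, L k j * Real.log ‖z j‖), fun k => ?_, ?_⟩
    · have := norm_pos_iff.2 (ha k)
      positivity
    · rw [← hz]
      congr 1
      refine Finset.sum_congr rfl fun k _ => ?_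
      rw [← hmono]
      congr 1
      refine Finset.prod_congr rfl fun j _ => ?_
      rw [← hzx j]
  · rintro ⟨t, ht, h⟩
    let r : Fin n → ℝ := Li.mulVec (fun k => Real.log (t k) - Real.log ‖a k‖)
    have hr : ∀ k, ∑ j, L k j * r j = Real.log (t k) - Real.log ‖a k‖ := by
      intro k
      have : (L.map (Int.cast : ℤ → ℝ)).mulVec r = fun k => Real.log (t k) - Real.log ‖a k‖ := by
        simp only [r, Matrix.mulVec_mulVec, h1, Matrix.one_mulVec]
      have := congrFun this k
      simpa [Matrix.mulVec, dotProduct] using this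
    refine ⟨fun j => exp ((r j : ℂ) + x j * I), fun j => Complex.exp_ne_zero _, ?_, fun j => ?_⟩
    · rw [← h]
      congr 1
      refine Finset.sum_congr rfl fun k _ => ?_
      rw [hmono, hr, Real.exp_sub, Real.exp_log (ht k), Real.exp_log (norm_pos_iff.2 (ha k))]
      congr 2
      have := (norm_pos_iff.2 (ha k)).ne'
      field_simp
    · have h3 : ((r j : ℂ) + x j * I).im = x j := by simp
      rw [Complex.arg_exp, h3, coam_coe_eq]
      refine ⟨toIocDiv Real.two_pi_pos (-Real.pi) (x j), ?_⟩
      rw [toIocMod, zsmul_eq_mul]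
      ring

theorem coam_main
    (n : ℕ) (L : Matrix (Fin n) (Fin n) ℤ) (hL : L.det ≠ 0)
    (a : Fin n → ℂ) (ha : ∀ k, a k ≠ 0)
    (coAmoeba : Set (Fin n → AddCircle (2 * Real.pi)))
    (hcoAmoeba : coAmoeba = {θ : Fin n → AddCircle (2 * Real.pi) | ∃ z : Fin n → ℂ,
      (∀ j, z j ≠ 0) ∧ 1 + ∑ k, a k * ∏ j, z j ^ (L k j) = 0 ∧
      ∀ j, θ j = ((z j).arg : AddCircle (2 * Real.pi))}) :
    {C | ∃ θ ∈ (closure coAmoeba)ᶜ,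
        C = connectedComponentIn (closure coAmoeba)ᶜ θ}.ncard = L.det.natAbs := by
  set M : Matrix (Fin n) (Fin n) ℝ := L.map (Int.cast : ℤ → ℝ) with hM
  have hdet : IsUnit M.det := by
    have : M.det = (L.det : ℝ) := (Int.cast_det L).symm
    rw [this, isUnit_iff_ne_zero]
    exact_mod_cast hL
  have hMi : M * M⁻¹ = 1 := Matrix.mul_nonsing_inv _ hdet
  have hiM : M⁻¹ * M = 1 := Matrix.nonsing_inv_mul _ hdet
  have hMv : ∀ (x : Fin n → ℝ) k, M.mulVec x k = ∑ j, L k j * x j := by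
    intro x k
    simp [hM, Matrix.mulVec, dotProduct]
  let b : Fin n → ℝ := fun k => (a k).arg
  let Q : (Fin n → ℝ) → (Fin n → AddCircle (2 * Real.pi)) :=
    Pi.map fun _ (r : ℝ) => (r : AddCircle (2 * Real.pi))
  let A : (Fin n → ℝ) ≃ₜ (Fin n → ℝ) :=
    { toFun := fun y => M⁻¹.mulVec (y - b)
      invFun := fun x => M.mulVec x + b
      left_inv := fun y => by simp [Matrix.mulVec_mulVec, hMi]
      right_inv := fun x => by simp [Matrix.mulVec_mulVec, hiM]
      continuous_toFun := by fun_prop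
      continuous_invFun := by fun_prop }
  have hAdef : ∀ y, A y = M⁻¹.mulVec (y - b) := fun _ => rfl
  have hA : ∀ y, M.mulVec (A y) = y - b := fun y => by
    rw [hAdef, Matrix.mulVec_mulVec, hMi, Matrix.one_mulVec]
  let G : (Fin n → ℝ) → (Fin n → AddCircle (2 * Real.pi)) := Q ∘ A
  have hQc : Continuous Q := Continuous.piMap fun _ => AddCircle.continuous_mk' _
  have hQo : IsOpenMap Q := IsOpenMap.piMap (fun _ => QuotientAddGroup.isOpenMap_coe)
    (by simp [Filter.cofinite_eq_bot])
  have hQs : Function.Surjective Q := Function.Surjective.piMap fun _ =>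
    QuotientAddGroup.mk_surjective
  have hGc : Continuous G := hQc.comp A.continuous
  have hGo : IsOpenMap G := hQo.comp A.isOpenMap
  have hGs : Function.Surjective G := hQs.comp A.surjective
  have hGeq : ∀ y y', G y = G y' ↔ ∃ l : Fin n → ℤ,
      ∀ k, y k = y' k + 2 * Real.pi * ((L.mulVec l) k : ℤ) := by
    intro y y'
    have hcast : ∀ l : Fin n → ℤ, ∀ k, (((L.mulVec l) k : ℤ) : ℝ) =
        M.mulVec (fun j => (l j : ℝ)) k := by
      intro l k
      rw [hMv]
      simp [Matrix.mulVec, dotProduct]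
    have h1 : G y = G y' ↔ ∃ l : Fin n → ℤ, ∀ j, A y j = A y' j + 2 * Real.pi * l j := by
      rw [funext_iff, ← Classical.skolem (p := fun j (m : ℤ) => A y j = A y' j + 2 * Real.pi * m)]
      exact forall_congr' fun j => coam_coe_eq _ _
    rw [h1]
    refine exists_congr fun l => ?_
    have h2 : (∀ j, A y j = A y' j + 2 * Real.pi * l j) ↔
        A y = A y' + (2 * Real.pi) • (fun j => (l j : ℝ)) := by
      rw [funext_iff]; rfl
    have h3 : (∀ k, y k = y' k + 2 * Real.pi * ((L.mulVec l) k : ℤ)) ↔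
        y = y' + (2 * Real.pi) • M.mulVec (fun j => (l j : ℝ)) := by
      rw [funext_iff]
      simp only [hcast]
      rfl
    rw [h2, h3]
    constructor
    · intro h
      have h4 := congrArg M.mulVec h
      rw [Matrix.mulVec_add, Matrix.mulVec_smul, hA, hA] at h4
      rw [← sub_left_inj (a := b), h4]
      abel
    · intro h
      rw [hAdef, hAdef, h, add_sub_right_comm, Matrix.mulVec_add, Matrix.mulVec_smul,
        Matrix.mulVec_mulVec, hiM, Matrix.one_mulVec]
  have hGH : G ⁻¹' coAmoeba = {y | coamH y} := by
    ext y
    have h1 := coam_mem_iff n L a ha M⁻¹ hMi (A y)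
    have h2 : (fun k => (a k).arg + ∑ j, L k j * A y j) = y := by
      ext k
      rw [← hMv, hA]
      simp [b]
    rw [h2] at h1
    rw [hcoAmoeba]
    exact h1
  have hΩ : ∀ y, G y ∈ (closure coAmoeba)ᶜ ↔
      ∃ m : Fin n → ℤ, (fun k => y k - 2 * Real.pi * m k) ∈ coamCell n := by
    intro y
    rw [← coam_closure_iff, ← hGH, ← hGo.preimage_closure_eq_closure_preimage hGc]
    rfl
  let S : (Fin n → ℤ) → Set (Fin n → ℝ) := fun m =>
    (fun y k => y k + 2 * Real.pi * m k) '' coamCell n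
  have hS : ∀ m y, y ∈ S m ↔ (fun k => y k - 2 * Real.pi * m k) ∈ coamCell n := by
    intro m y
    constructor
    · rintro ⟨z, hz, rfl⟩
      simpa using hz
    · intro h
      exact ⟨_, h, by simp⟩
  let C : (Fin n → ℤ) → Set (Fin n → AddCircle (2 * Real.pi)) := fun m => G '' S m
  have hSo : ∀ m, IsOpen (S m) := by
    intro m
    have : S m = (fun (y : Fin n → ℝ) k => y k - 2 * Real.pi * m k) ⁻¹' coamCell n := by
      ext y; exact hS m y
    rw [this]
    exact (coamCell_isOpen n).preimage (by fun_prop)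
  have hmk : ∀ m m', (Submodule.Quotient.mk m : (Fin n → ℤ) ⧸ LinearMap.range (Matrix.toLin' L)) =
      Submodule.Quotient.mk m' ↔ ∃ l, L.mulVec l = m - m' := by
    intro m m'
    rw [Submodule.Quotient.eq, LinearMap.mem_range]
    rfl
  have hC1 : ∀ m m', (∃ l, L.mulVec l = m - m') → C m ⊆ C m' := by
    rintro m m' ⟨l, hl⟩ _ ⟨y, hy, rfl⟩
    refine ⟨fun k => y k - 2 * Real.pi * (m k - m' k), ?_, ?_⟩
    · rw [hS] at hy ⊢
      convert hy using 2 with k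
      ring
    · symm
      rw [hGeq]
      refine ⟨l, fun k => ?_⟩
      rw [hl]
      simp
  have hC2 : ∀ m m', (C m ∩ C m').Nonempty → ∃ l, L.mulVec l = m - m' := by
    rintro m m' ⟨_, ⟨y, hy, rfl⟩, ⟨y', hy', h⟩⟩
    obtain ⟨l, hl⟩ := (hGeq _ _).1 h.symm
    refine ⟨l, ?_⟩
    ext k
    rw [hS] at hy hy'
    have h1 := abs_lt.1 (hy.1 k)
    have h2 := abs_lt.1 (hy'.1 k)
    have h3 := hl k
    simp only at h1 h2
    set d : ℤ := L.mulVec l k - (m k - m' k) with hd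
    have h4 : (d : ℝ) = (L.mulVec l k : ℤ) - (m k - m' k) := by simp [hd]
    have h5 : |2 * Real.pi * (d : ℝ)| < 2 * Real.pi * 1 := by
      rw [h4, abs_lt]
      constructor <;> linarith [h1.1, h1.2, h2.1, h2.2]
    rw [abs_mul, abs_of_pos Real.two_pi_pos] at h5
    have h6 : |(d : ℝ)| < 1 := lt_of_mul_lt_mul_left h5 Real.two_pi_pos.le
    have h7 : d = 0 := by
      rw [← Int.abs_lt_one_iff]
      exact_mod_cast h6
    rw [Pi.sub_apply]
    omega
  have hsymm : ∀ m m' : Fin n → ℤ, (∃ l, L.mulVec l = m - m') → ∃ l, L.mulVec l = m' - m := by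
    rintro m m' ⟨l, hl⟩
    exact ⟨-l, by rw [Matrix.mulVec_neg, hl]; abel⟩
  have hC3 : ∀ m m', (∃ l, L.mulVec l = m - m') → C m = C m' := fun m m' h =>
    Set.Subset.antisymm (hC1 _ _ h) (hC1 _ _ (hsymm _ _ h))
  have hCne : ∀ m, (C m).Nonempty := fun m =>
    ((Set.Nonempty.image _ ⟨0, coamCell_zero_mem n⟩).image _)
  rw [coam_components (closure coAmoeba)ᶜ C ?_ (fun m => hGo _ (hSo m)) ?_ hCne
    (fun m m' h => hC3 m m' (hC2 m m' h))]
  · let D : ((Fin n → ℤ) ⧸ LinearMap.range (Matrix.toLin' L)) → Set (Fin n → AddCircle (2 * Real.pi)) :=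
      fun q => C q.out
    have hout : ∀ q : (Fin n → ℤ) ⧸ LinearMap.range (Matrix.toLin' L),
        Submodule.Quotient.mk q.out = q := fun q => Quotient.out_eq q
    have hDi : Function.Injective D := by
      intro q q' h
      have h1 : (C q.out ∩ C q'.out).Nonempty := by
        have h' : C q.out = C q'.out := h
        rw [h', Set.inter_self]
        exact hCne _
      have h2 := (hmk _ _).2 (hC2 _ _ h1)
      rwa [hout, hout] at h2
    have hr : Set.range C = Set.range D := by
      apply Set.Subset.antisymm
      · rintro _ ⟨m, rfl⟩
        refine ⟨Submodule.Quotient.mk m, hC3 _ _ ?_⟩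
        rw [← hmk, hout]
      · rintro _ ⟨q, rfl⟩
        exact ⟨q.out, rfl⟩
    rw [hr, ← coam_index n L hL, ← Nat.card_coe_set_eq]
    exact Nat.card_range_of_injective hDi
  · ext θ
    obtain ⟨y, rfl⟩ := hGs θ
    rw [hΩ, Set.mem_iUnion]
    constructor
    · rintro ⟨m, hm⟩
      exact ⟨m, y, (hS _ _).2 hm, rfl⟩
    · rintro ⟨m, y', hy', h⟩
      rw [← hΩ, ← h, hΩ]
      exact ⟨m, (hS _ _).1 hy'⟩
  · intro m
    refine ((coamCell_isPreconnected n).image _ ?_).image _ hGc.continuousOn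
    exact Continuous.continuousOn (by fun_prop)

/-- **Lemma 3.3(ii)** (second part). For `f(z) = 1 + Σ_k a_k z^{α_k}` with invertible
integer exponent matrix `L`, whose Newton polytope `Δ_f` is the simplex with vertices
`0, α₁, …, α_n` (the rows of `L`), the number of connected components of the
complement in the torus `Tⁿ = (ℝ/2πℤ)ⁿ` of the closure of the coamoeba of `V_f`
equals `|det L| = n! · Vol(Δ_f)`. -/
theorem coamoeba_simplex_complement_components_card
    (n : ℕ) (L : Matrix (Fin n) (Fin n) ℤ) (hL : L.det ≠ 0)
    (a : Fin n → ℂ) (ha : ∀ k, a k ≠ 0)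
    (Δ : Set (Fin n → ℝ))
    (hΔ : Δ = convexHull ℝ (insert 0 (Set.range fun (k : Fin n) (j : Fin n) => (L k j : ℝ))))
    (coAmoeba : Set (Fin n → AddCircle (2 * Real.pi)))
    (hcoAmoeba : coAmoeba = {θ : Fin n → AddCircle (2 * Real.pi) | ∃ z : Fin n → ℂ,
      (∀ j, z j ≠ 0) ∧ 1 + ∑ k, a k * ∏ j, z j ^ (L k j) = 0 ∧
      ∀ j, θ j = ((z j).arg : AddCircle (2 * Real.pi))}) :
    {C | ∃ θ ∈ (closure coAmoeba)ᶜ,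
        C = connectedComponentIn (closure coAmoeba)ᶜ θ}.ncard = L.det.natAbs ∧
      (L.det.natAbs : ℝ≥0∞) = (n.factorial : ℝ≥0∞) * MeasureTheory.volume Δ := by
  subst hΔ
  exact ⟨coam_main n L hL a ha coAmoeba hcoAmoeba, coam_volume_simplex n L⟩
end

section
/- Let f(z,w) = Σ_{(α,β)∈A} a_{(α,β)} z^α w^β be a Laurent polynomial in two variables with finite nonempty support A ⊆ ℤ² and nonzero complex coefficients, and let Δ_f ⊆ ℝ² be its Newton polygon. Then the Lebesgue (Haar) measure of the coamoeba of V_f in the torus T² = (ℝ/2πℤ)² (of total mass 4π²) is at most 2π² · Area(Δ_f), where Area denotes 2-dimensional Lebesgue measure. (Remark 5.17(2); the paper proves the stronger bound for area counted with multiplicity.) -/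
open Complex
open scoped ENNReal

instance : Fact (0 < 2 * Real.pi) := ⟨by positivity⟩


/-- Twice the signed area of a triangle. -/
def dt {R : Type*} [CommRing R] (x y z : Fin 2 → R) : R :=
  (y 0 - x 0) * (z 1 - x 1) - (y 1 - x 1) * (z 0 - x 0)

/-- Support contained in two adjacent lattice lines. -/
def IsStrip (A : Finset (Fin 2 → ℤ)) : Prop :=
  ∃ e e' P : Fin 2 → ℤ, e 0 * e' 1 - e 1 * e' 0 = 1 ∧
    ∀ X ∈ A, e 0 * (X 1 - P 1) - e 1 * (X 0 - P 0) = 0 ∨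
      e 0 * (X 1 - P 1) - e 1 * (X 0 - P 0) = 1

/-- Support of the exceptional triangle with one interior point. -/
def IsTri (A : Finset (Fin 2 → ℤ)) : Prop :=
  ∃ P Q R C : Fin 2 → ℤ, P ∈ A ∧ Q ∈ A ∧ R ∈ A ∧ (∀ j, P j + Q j + R j = 3 * C j) ∧
    (Q 0 - C 0) * (R 1 - C 1) - (Q 1 - C 1) * (R 0 - C 0) = 1 ∧
    ∀ X ∈ A, X = P ∨ X = Q ∨ X = R ∨ X = C

/-- The hull has large area. -/
def IsLarge (A : Finset (Fin 2 → ℤ)) : Prop :=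
  ∃ X Y Z W : Fin 2 → ℤ, X ∈ A ∧ Y ∈ A ∧ Z ∈ A ∧ W ∈ A ∧ 0 ≤ dt X Y Z ∧ dt X Y W ≤ 0 ∧
    4 ≤ dt X Y Z - dt X Y W

lemma edge_case (A : Finset (Fin 2 → ℤ)) (P Q R : Fin 2 → ℤ) (hP : P ∈ A) (hQ : Q ∈ A)
    (hR : R ∈ A) (hmax : ∀ X ∈ A, ∀ Y ∈ A, ∀ Z ∈ A, dt X Y Z ≤ dt P Q R)
    (h2 : 2 ≤ dt P Q R) (h0 : dt P Q R ∣ Q 0 - P 0) (h1 : dt P Q R ∣ Q 1 - P 1) :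
    IsStrip A ∨ IsLarge A := by
  obtain ⟨e0, he0⟩ := h0
  obtain ⟨e1, he1⟩ := h1
  by_cases hneg : ∃ X ∈ A, e0 * (X 1 - P 1) - e1 * (X 0 - P 0) < 0
  · right
    obtain ⟨X, hX, hlt⟩ := hneg
    have hd : dt P Q X = dt P Q R * (e0 * (X 1 - P 1) - e1 * (X 0 - P 0)) := by
      rw [show dt P Q X = (Q 0 - P 0) * (X 1 - P 1) - (Q 1 - P 1) * (X 0 - P 0) from rfl,
        he0, he1]; ring
    refine ⟨P, Q, R, X, hP, hQ, hR, hX, by omega, ?_, ?_⟩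
    · nlinarith
    · nlinarith
  · left
    push Not at hneg
    refine ⟨![e0, e1], fun j => R j - P j, P, ?_, ?_⟩
    · have : dt P Q R * (e0 * (R 1 - P 1) - e1 * (R 0 - P 0)) = dt P Q R * 1 := by
        conv_rhs => rw [mul_one, show dt P Q R = (Q 0 - P 0) * (R 1 - P 1) -
          (Q 1 - P 1) * (R 0 - P 0) from rfl, he0, he1]
        ring
      have := mul_left_cancel₀ (by omega) this
      simpa using this
    · intro X hX
      have hd : dt P Q X = dt P Q R * (e0 * (X 1 - P 1) - e1 * (X 0 - P 0)) := by
        rw [show dt P Q X = (Q 0 - P 0) * (X 1 - P 1) - (Q 1 - P 1) * (X 0 - P 0) from rfl,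
          he0, he1]; ring
      have h3 := hneg X hX
      have h4 := hmax P hP Q hQ X hX
      have h5 : e0 * (X 1 - P 1) - e1 * (X 0 - P 0) ≤ 1 := by
        by_contra h
        push Not at h
        nlinarith
      simp only [Matrix.cons_val_zero, Matrix.cons_val_one]
      omega

lemma dt_rot {R : Type*} [CommRing R] (x y z : Fin 2 → R) : dt x y z = dt y z x := by
  simp only [dt]; ring

lemma dt_swap {R : Type*} [CommRing R] (x y z : Fin 2 → R) : dt x y z = - dt y x z := by
  simp only [dt]; ring

lemma dt_sum {R : Type*} [CommRing R] (x y z w : Fin 2 → R) :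
    dt x y w + dt y z w + dt z x w = dt x y z := by
  simp only [dt]; ring

lemma edge_case' (A : Finset (Fin 2 → ℤ)) (D : ℤ) (P Q R : Fin 2 → ℤ) (hP : P ∈ A) (hQ : Q ∈ A)
    (hR : R ∈ A) (hD : dt P Q R = D) (hmax : ∀ X ∈ A, ∀ Y ∈ A, ∀ Z ∈ A, dt X Y Z ≤ D)
    (h2 : 2 ≤ D) (h : (D ∣ Q 0 - P 0 ∧ D ∣ Q 1 - P 1) ∨ (D ∣ R 0 - Q 0 ∧ D ∣ R 1 - Q 1) ∨
      (D ∣ P 0 - R 0 ∧ D ∣ P 1 - R 1)) :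
    IsStrip A ∨ IsLarge A := by
  have h1 : dt Q R P = D := by rw [← dt_rot]; exact hD
  have h3 : dt R P Q = D := by rw [dt_rot]; exact hD
  rcases h with ⟨h, h'⟩ | ⟨h, h'⟩ | ⟨h, h'⟩
  · subst hD; exact edge_case A P Q R hP hQ hR hmax h2 h h'
  · subst h1; exact edge_case A Q R P hQ hR hP hmax h2 h h'
  · subst h3; exact edge_case A R P Q hR hP hQ hmax h2 h h'

lemma strip_one (A : Finset (Fin 2 → ℤ)) (P Q R : Fin 2 → ℤ) 
    (hD : dt P Q R = 1) (hmax : ∀ X ∈ A, dt P Q X ≤ 1) (hpos : ∀ X ∈ A, 0 ≤ dt P Q X) :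
    IsStrip A := by
  refine ⟨fun j => Q j - P j, fun j => R j - P j, P, hD, fun X hX => ?_⟩
  have h1 := hmax X hX
  have h2 := hpos X hX
  simp only [dt] at h1 h2
  simp only
  omega

lemma zmod2_case : ∀ a b c d : ZMod 2, a * d - b * c = 0 →
    (a = 0 ∧ b = 0) ∨ (c = 0 ∧ d = 0) ∨ (c - a = 0 ∧ d - b = 0) := by decide

lemma zmod3_case : ∀ a b c d : ZMod 3, a * d - b * c = 0 →
    (a = 0 ∧ b = 0) ∨ (c = 0 ∧ d = 0) ∨ (c - a = 0 ∧ d - b = 0) ∨ (a + c = 0 ∧ b + d = 0) := by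
  decide

lemma collinear_strip (A : Finset (Fin 2 → ℤ)) (hA : A.Nonempty)
    (h : ∀ X ∈ A, ∀ Y ∈ A, ∀ Z ∈ A, dt X Y Z = 0) : IsStrip A := by
  obtain ⟨P, hP⟩ := hA
  by_cases hall : ∀ X ∈ A, X = P
  · refine ⟨![1, 0], ![0, 1], P, by simp, fun X hX => ?_⟩
    left; rw [hall X hX]; simp
  · push Not at hall
    obtain ⟨Q, hQ, hne⟩ := hall
    have hg : 0 < Int.gcd (Q 0 - P 0) (Q 1 - P 1) := by
      rw [Nat.pos_iff_ne_zero]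
      intro h0
      rw [Int.gcd_eq_zero_iff] at h0
      apply hne
      funext j
      fin_cases j
      · have := h0.1; simp; omega
      · have := h0.2; simp; omega
    obtain ⟨e0, he0⟩ := Int.gcd_dvd_left (Q 0 - P 0) (Q 1 - P 1)
    obtain ⟨e1, he1⟩ := Int.gcd_dvd_right (Q 0 - P 0) (Q 1 - P 1)
    have hb := Int.gcd_eq_gcd_ab (Q 0 - P 0) (Q 1 - P 1)
    set g : ℤ := (Int.gcd (Q 0 - P 0) (Q 1 - P 1) : ℤ) with hgdef
    have hgpos : g ≠ 0 := by positivity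
    set x := Int.gcdA (Q 0 - P 0) (Q 1 - P 1)
    set y := Int.gcdB (Q 0 - P 0) (Q 1 - P 1)
    refine ⟨![e0, e1], ![-y, x], P, ?_, fun X hX => ?_⟩
    · simp only [Matrix.cons_val_zero, Matrix.cons_val_one]
      apply mul_left_cancel₀ hgpos
      rw [he0, he1] at hb
      linarith
    · left
      simp only [Matrix.cons_val_zero, Matrix.cons_val_one]
      apply mul_left_cancel₀ hgpos
      have := h P hP Q hQ X hX
      simp only [dt, he0, he1] at this
      linarith

lemma tri_case (A : Finset (Fin 2 → ℤ)) (P Q R : Fin 2 → ℤ) (hP : P ∈ A) (hQ : Q ∈ A)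
    (hR : R ∈ A) (hD : dt P Q R = 3) 
    (h : 3 ∣ (Q 0 - P 0) + (R 0 - P 0) ∧ 3 ∣ (Q 1 - P 1) + (R 1 - P 1)) :
    IsTri A ∨ IsLarge A := by
  have h1 : dt Q R P = 3 := by rw [← dt_rot]; exact hD
  have h3 : dt R P Q = 3 := by rw [dt_rot]; exact hD
  by_cases hlarge : ∃ X ∈ A, dt P Q X < 0 ∨ dt Q R X < 0 ∨ dt R P X < 0
  · right
    obtain ⟨X, hX, h | h | h⟩ := hlarge
    · exact ⟨P, Q, R, X, hP, hQ, hR, hX, by omega, by omega, by omega⟩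
    · exact ⟨Q, R, P, X, hQ, hR, hP, hX, by omega, by omega, by omega⟩
    · exact ⟨R, P, Q, X, hR, hP, hQ, hX, by omega, by omega, by omega⟩
  · left
    push Not at hlarge
    obtain ⟨⟨c0, hc0⟩, ⟨c1, hc1⟩⟩ := h
    obtain ⟨q0, hq0⟩ : ∃ q0, q0 = Q 0 - (P 0 + c0) := ⟨_, rfl⟩
    obtain ⟨q1, hq1⟩ : ∃ q1, q1 = Q 1 - (P 1 + c1) := ⟨_, rfl⟩
    obtain ⟨r0, hr0⟩ : ∃ r0, r0 = R 0 - (P 0 + c0) := ⟨_, rfl⟩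
    obtain ⟨r1, hr1⟩ : ∃ r1, r1 = R 1 - (P 1 + c1) := ⟨_, rfl⟩
    have ec0 : c0 = q0 + r0 := by omega
    have ec1 : c1 = q1 + r1 := by omega
    have eQ0 : Q 0 = P 0 + 2 * q0 + r0 := by omega
    have eQ1 : Q 1 = P 1 + 2 * q1 + r1 := by omega
    have eR0 : R 0 = P 0 + 2 * r0 + q0 := by omega
    have eR1 : R 1 = P 1 + 2 * r1 + q1 := by omega
    have hdet : q0 * r1 - q1 * r0 = 1 := by
      simp only [dt, eQ0, eQ1, eR0, eR1] at hD
      linarith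
    refine ⟨P, Q, R, fun j => P j + ![c0, c1] j, hP, hQ, hR, ?_, ?_, fun X hX => ?_⟩
    · intro j; fin_cases j
      · simp; omega
      · simp; omega
    · simp only [Matrix.cons_val_zero, Matrix.cons_val_one]
      rw [← hq0, ← hq1, ← hr0, ← hr1]; exact hdet
    · obtain ⟨a1, a2, a3⟩ := hlarge X hX
      obtain ⟨x, hx⟩ : ∃ x, x = (X 0 - P 0 - c0) * r1 - (X 1 - P 1 - c1) * r0 := ⟨_, rfl⟩
      obtain ⟨y, hy⟩ : ∃ y, y = q0 * (X 1 - P 1 - c1) - q1 * (X 0 - P 0 - c0) := ⟨_, rfl⟩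
      have eX0 : X 0 = P 0 + c0 + x * q0 + y * r0 := by
        rw [hx, hy]; linear_combination (-(X 0 - P 0 - c0)) * hdet
      have eX1 : X 1 = P 1 + c1 + x * q1 + y * r1 := by
        rw [hx, hy]; linear_combination (-(X 1 - P 1 - c1)) * hdet
      have b1 : dt P Q X = 1 - x + 2 * y := by
        simp only [dt, eX0, eX1, eQ0, eQ1, ec0, ec1]
        linear_combination (1 - x + 2 * y) * hdet
      have b2 : dt Q R X = 1 - x - y := by
        simp only [dt, eX0, eX1, eQ0, eQ1, eR0, eR1, ec0, ec1]
        linear_combination (1 - x - y) * hdet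
      have b3 : dt R P X = 1 + 2 * x - y := by
        simp only [dt, eX0, eX1, eR0, eR1, ec0, ec1]
        linear_combination (1 + 2 * x - y) * hdet
      rw [b1] at a1; rw [b2] at a2; rw [b3] at a3
      have x1 : x ≤ 1 := by omega
      have x2 : -1 ≤ x := by omega
      have key : (x = -1 ∧ y = -1) ∨ (x = 1 ∧ y = 0) ∨ (x = 0 ∧ y = 1) ∨ (x = 0 ∧ y = 0) := by
        omega
      have two : ∀ Y : Fin 2 → ℤ, X 0 = Y 0 → X 1 = Y 1 → X = Y := by
        intro Y h0 h1; funext j; fin_cases j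
        · exact h0
        · exact h1
      rcases key with ⟨rfl, rfl⟩ | ⟨rfl, rfl⟩ | ⟨rfl, rfl⟩ | ⟨rfl, rfl⟩
      · left; apply two <;> linarith
      · right; left; apply two <;> linarith
      · right; right; left; apply two <;> linarith
      · right; right; right; apply two <;> simp <;> linarith

lemma classify (A : Finset (Fin 2 → ℤ)) (hA : A.Nonempty) : IsStrip A ∨ IsTri A ∨ IsLarge A := by
  obtain ⟨⟨P, Q, R⟩, hmem, hmax'⟩ := Finset.exists_max_image (A ×ˢ A ×ˢ A)
    (fun t => dt t.1 t.2.1 t.2.2) (by simp [hA])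
  simp only [Finset.mem_product] at hmem hmax'
  obtain ⟨hP, hQ, hR⟩ := hmem
  have hmax : ∀ X ∈ A, ∀ Y ∈ A, ∀ Z ∈ A, dt X Y Z ≤ dt P Q R :=
    fun X hX Y hY Z hZ => hmax' (X, Y, Z) ⟨hX, hY, hZ⟩
  clear hmax'
  obtain ⟨D, hD⟩ : ∃ D, D = dt P Q R := ⟨_, rfl⟩
  rw [← hD] at hmax
  have hD0 : 0 ≤ D := by
    have := hmax P hP P hP P hP
    simpa [dt] using this
  rcases (by omega : D = 0 ∨ D = 1 ∨ D = 2 ∨ D = 3 ∨ 4 ≤ D) with h | h | h | h | h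
  · left
    refine collinear_strip A hA fun X hX Y hY Z hZ => ?_
    have h1 := hmax X hX Y hY Z hZ
    have h2 := hmax Y hY X hX Z hZ
    have := dt_swap X Y Z
    omega
  · left
    subst h
    have h1 : dt Q R P = 1 := by rw [← dt_rot]; exact hD.symm
    have h3 : dt R P Q = 1 := by rw [dt_rot]; exact hD.symm
    by_contra hns
    have k1 : ∃ X ∈ A, dt P Q X < 0 := by
      by_contra hc; push Not at hc
      exact hns (strip_one A P Q R hD.symm (fun X hX => hmax P hP Q hQ X hX) hc)
    have k2 : ∃ X ∈ A, dt Q R X < 0 := by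
      by_contra hc; push Not at hc
      exact hns (strip_one A Q R P h1 (fun X hX => hmax Q hQ R hR X hX) hc)
    have k3 : ∃ X ∈ A, dt R P X < 0 := by
      by_contra hc; push Not at hc
      exact hns (strip_one A R P Q h3 (fun X hX => hmax R hR P hP X hX) hc)
    obtain ⟨X, hX, k1⟩ := k1
    obtain ⟨Y, hY, k2⟩ := k2
    obtain ⟨Z, hZ, k3⟩ := k3
    have key : dt X Y Z * (dt P Q R) ^ 2 =
        dt P Q X * (dt Q R Y * dt R P Z - dt R P Y * dt Q R Z)
        - dt Q R X * (dt P Q Y * dt R P Z - dt R P Y * dt P Q Z)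
        + dt R P X * (dt P Q Y * dt Q R Z - dt Q R Y * dt P Q Z) := by
      simp only [dt]; ring
    have sX := dt_sum P Q R X
    have sY := dt_sum P Q R Y
    have sZ := dt_sum P Q R Z
    have x1 := hmax P hP Q hQ X hX
    have x2 := hmax Q hQ R hR X hX
    have x3 := hmax R hR P hP X hX
    have y1 := hmax P hP Q hQ Y hY
    have y2 := hmax Q hQ R hR Y hY
    have y3 := hmax R hR P hP Y hY
    have z1 := hmax P hP Q hQ Z hZ
    have z2 := hmax Q hQ R hR Z hZ
    have z3 := hmax R hR P hP Z hZ
    rw [← hD] at key sX sY sZ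
    rw [show dt P Q X = -1 by omega, show dt Q R X = 1 by omega, show dt R P X = 1 by omega,
      show dt P Q Y = 1 by omega, show dt Q R Y = -1 by omega, show dt R P Y = 1 by omega,
      show dt P Q Z = 1 by omega, show dt Q R Z = 1 by omega, show dt R P Z = -1 by omega] at key
    have := hmax X hX Y hY Z hZ
    omega
  · have hh := zmod2_case (Q 0 - P 0 : ℤ) (Q 1 - P 1 : ℤ) (R 0 - P 0 : ℤ) (R 1 - P 1 : ℤ) (by
      have : ((D : ℤ) : ZMod 2) = 0 := by rw [h]; rfl
      rw [hD] at this
      simp only [dt] at this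
      exact_mod_cast this)
    have e := edge_case' A D P Q R hP hQ hR hD.symm hmax (by omega) (by
      norm_cast at hh
      simp only [ZMod.intCast_zmod_eq_zero_iff_dvd] at hh
      subst h
      push_cast at hh
      omega)
    tauto
  · have hh := zmod3_case (Q 0 - P 0 : ℤ) (Q 1 - P 1 : ℤ) (R 0 - P 0 : ℤ) (R 1 - P 1 : ℤ) (by
      have : ((D : ℤ) : ZMod 3) = 0 := by rw [h]; rfl
      rw [hD] at this
      simp only [dt] at this
      exact_mod_cast this)
    norm_cast at hh
    simp only [ZMod.intCast_zmod_eq_zero_iff_dvd] at hh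
    push_cast at hh
    by_cases h4 : 3 ∣ (Q 0 - P 0) + (R 0 - P 0) ∧ 3 ∣ (Q 1 - P 1) + (R 1 - P 1)
    · have := tri_case A P Q R hP hQ hR (by omega) h4
      tauto
    · have e := edge_case' A D P Q R hP hQ hR hD.symm hmax (by omega) (by
        subst h
        omega)
      tauto
  · right; right
    exact ⟨P, Q, R, P, hP, hQ, hR, hP, by omega, by simp [dt], by simp [dt] at *; omega⟩


/-- Half-open standard triangle. -/
def stdTri : Set (Fin 2 → ℝ) := {x | 0 ≤ x 0 ∧ 0 < x 1 ∧ x 0 + x 1 ≤ 1}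

lemma half_le_stdTri : ENNReal.ofReal (1 / 2) ≤ MeasureTheory.volume stdTri := by
  have hcube : MeasureTheory.volume (Set.pi Set.univ (fun _ : Fin 2 => Set.Ioo (0 : ℝ) 1)) = 1 := by
    rw [Real.volume_pi_Ioo]; simp
  have hsub : Set.pi Set.univ (fun _ : Fin 2 => Set.Ioo (0 : ℝ) 1) ⊆
      stdTri ∪ (fun x : Fin 2 → ℝ => (fun _ => 1) - x) ⁻¹' stdTri := by
    intro x hx
    have h0 := hx 0 (Set.mem_univ _)
    have h1 := hx 1 (Set.mem_univ _)
    simp only [Set.mem_Ioo] at h0 h1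
    simp only [stdTri, Set.mem_union, Set.mem_preimage, Set.mem_ofPred_eq, Pi.sub_apply]
    rcases le_total (x 0 + x 1) 1 with h | h
    · left; exact ⟨h0.1.le, h1.1, h⟩
    · right; refine ⟨by linarith, by linarith, by linarith⟩
  have hpre : MeasureTheory.volume ((fun x : Fin 2 → ℝ => (fun _ => 1) - x) ⁻¹' stdTri)
      = MeasureTheory.volume stdTri := by
    have := (MeasureTheory.Measure.measurePreserving_sub_left
      (MeasureTheory.volume : MeasureTheory.Measure (Fin 2 → ℝ)) (fun _ => (1 : ℝ)))
    apply this.measure_preimage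
    apply MeasurableSet.nullMeasurableSet
    unfold stdTri
    measurability
  have h := (MeasureTheory.measure_mono (μ := MeasureTheory.volume) hsub).trans
    (MeasureTheory.measure_union_le _ _)
  rw [hcube, hpre, ← two_mul] at h
  rw [one_div, ENNReal.ofReal_inv_of_pos (by norm_num), ENNReal.ofReal_ofNat]
  calc (2 : ℝ≥0∞)⁻¹ = 2⁻¹ * 1 := (mul_one _).symm
    _ ≤ 2⁻¹ * (2 * MeasureTheory.volume stdTri) := by gcongr
    _ = MeasureTheory.volume stdTri := by
      rw [← mul_assoc, ENNReal.inv_mul_cancel (by norm_num) (by norm_num), one_mul]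

lemma tri_image (x y z : Fin 2 → ℝ) :
    ENNReal.ofReal (|dt x y z| / 2) ≤ MeasureTheory.volume
      ((fun p : Fin 2 → ℝ => fun j => x j + p 0 * (y j - x j) + p 1 * (z j - x j)) '' stdTri) := by
  let M : Matrix (Fin 2) (Fin 2) ℝ := !![y 0 - x 0, z 0 - x 0; y 1 - x 1, z 1 - x 1]
  have hM : LinearMap.det (Matrix.toLin' M) = dt x y z := by
    rw [LinearMap.det_toLin', Matrix.det_fin_two_of]; simp only [dt]; ring
  have h1 : (fun p : Fin 2 → ℝ => fun j => x j + p 0 * (y j - x j) + p 1 * (z j - x j)) '' stdTri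
      = (fun q => x + q) '' (Matrix.toLin' M '' stdTri) := by
    rw [Set.image_image]
    congr 1
    funext p j
    fin_cases j <;> simp [M, dotProduct, Fin.sum_univ_two] <;> ring
  rw [h1, Set.image_add_left, MeasureTheory.measure_preimage_add,
    MeasureTheory.Measure.addHaar_image_linearMap, hM,
    div_eq_mul_one_div, ENNReal.ofReal_mul (abs_nonneg _)]
  gcongr
  exact half_le_stdTri

lemma area_quad (S : Set (Fin 2 → ℝ)) (hS : Convex ℝ S) (x y z w : Fin 2 → ℝ) (hx : x ∈ S)
    (hy : y ∈ S) (hz : z ∈ S) (hw : w ∈ S) (h1 : 0 ≤ dt x y z) (h2 : dt x y w ≤ 0) :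
    ENNReal.ofReal ((dt x y z - dt x y w) / 2) ≤ MeasureTheory.volume S := by
  have hin : ∀ u ∈ S, ∀ p ∈ stdTri, (fun j => x j + p 0 * (y j - x j) + p 1 * (u j - x j)) ∈ S := by
    intro u hu p hp
    have : (fun j => x j + p 0 * (y j - x j) + p 1 * (u j - x j)) =
        (1 - p 0 - p 1) • x + p 0 • y + p 1 • u := by
      funext j; simp; ring
    rw [this]
    have h3 := hS.sum_mem (t := Finset.univ) (w := ![1 - p 0 - p 1, p 0, p 1]) (z := ![x, y, u])
      (by
        obtain ⟨p1, p2, p3⟩ := hp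
        intro i _
        fin_cases i
        · simp; linarith
        · simpa using p1
        · simpa using p2.le)
      (by simp [Fin.sum_univ_three]; ring)
      (by intro i _; fin_cases i <;> simpa)
    simpa [Fin.sum_univ_three] using h3
  have hg : ∀ u : Fin 2 → ℝ, ∀ p : Fin 2 → ℝ,
      dt x y (fun j => x j + p 0 * (y j - x j) + p 1 * (u j - x j)) = p 1 * dt x y u := by
    intro u p; simp only [dt]; ring
  let H : Set (Fin 2 → ℝ) := {u | 0 < dt x y u}
  have hH : MeasurableSet H := by
    apply IsOpen.measurableSet
    apply isOpen_lt continuous_const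
    unfold dt; fun_prop
  rw [← MeasureTheory.measure_inter_add_sdiff S hH, sub_div, sub_eq_add_neg,
    ENNReal.ofReal_add (by linarith) (by linarith)]
  apply add_le_add
  · rcases h1.eq_or_lt with h | h
    · rw [← h]; simp
    · have := tri_image x y z
      rw [abs_of_nonneg h1] at this
      refine this.trans (MeasureTheory.measure_mono ?_)
      rintro _ ⟨p, hp, rfl⟩
      refine ⟨hin z hz p hp, ?_⟩
      simp only [H, Set.mem_ofPred_eq]
      rw [hg]; exact mul_pos hp.2.1 h
  · have := tri_image x y w
    rw [abs_of_nonpos h2, neg_div] at this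
    refine this.trans (MeasureTheory.measure_mono ?_)
    rintro _ ⟨p, hp, rfl⟩
    refine ⟨hin w hw p hp, ?_⟩
    simp only [H, Set.mem_ofPred_eq]
    rw [hg]; nlinarith [hp.2.1]

lemma area_int (A : Finset (Fin 2 → ℤ)) (X Y Z W : Fin 2 → ℤ) (hX : X ∈ A) (hY : Y ∈ A)
    (hZ : Z ∈ A) (hW : W ∈ A) (h1 : 0 ≤ dt X Y Z) (h2 : dt X Y W ≤ 0) (K : ℕ)
    (hK : (K : ℤ) ≤ dt X Y Z - dt X Y W) :
    ENNReal.ofReal (K / 2) ≤ MeasureTheory.volume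
      (convexHull ℝ ((fun (α : Fin 2 → ℤ) (j : Fin 2) => (α j : ℝ)) '' A)) := by
  have hc : ∀ X Y Z : Fin 2 → ℤ, dt (fun j => (X j : ℝ)) (fun j => (Y j : ℝ)) (fun j => (Z j : ℝ))
      = (dt X Y Z : ℤ) := by
    intro X Y Z; simp only [dt]; push_cast; rfl
  have hm : ∀ X ∈ A, (fun j => (X j : ℝ)) ∈
      convexHull ℝ ((fun (α : Fin 2 → ℤ) (j : Fin 2) => (α j : ℝ)) '' A) :=
    fun X hX => subset_convexHull ℝ _ ⟨X, hX, rfl⟩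
  refine le_trans ?_ (area_quad _ (convex_convexHull ℝ _) _ _ _ _ (hm X hX) (hm Y hY) (hm Z hZ)
    (hm W hW) (by rw [hc]; exact_mod_cast h1) (by rw [hc]; exact_mod_cast h2))
  rw [hc, hc]
  apply ENNReal.ofReal_le_ofReal
  have : (K : ℝ) ≤ (dt X Y Z : ℤ) - (dt X Y W : ℤ) := by exact_mod_cast hK
  linarith


/-- The torus. -/
abbrev TT := Fin 2 → AddCircle (2 * Real.pi)

/-- Laurent monomial. -/
def mon {K : Type*} [Field K] (x : Fin 2 → K) (n : Fin 2 → ℤ) : K := ∏ j, x j ^ n j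

/-- Unit complex numbers attached to a point of the torus. -/
noncomputable def U (θ : TT) (j : Fin 2) : ℂ := (AddCircle.toCircle (θ j) : ℂ)

lemma U_ne (θ : TT) (j : Fin 2) : U θ j ≠ 0 := Circle.coe_ne_zero _

lemma mon_ne {K : Type*} [Field K] (x : Fin 2 → K) (n : Fin 2 → ℤ) (hx : ∀ j, x j ≠ 0) :
    mon x n ≠ 0 := Finset.prod_ne_zero_iff.2 fun j _ => zpow_ne_zero _ (hx j)

lemma mon_add {K : Type*} [Field K] (x : Fin 2 → K) (n m : Fin 2 → ℤ) (hx : ∀ j, x j ≠ 0) :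
    mon x (n + m) = mon x n * mon x m := by
  simp only [mon, ← Finset.prod_mul_distrib]
  exact Finset.prod_congr rfl fun j _ => by rw [Pi.add_apply, zpow_add₀ (hx j)]

lemma mon_smul {K : Type*} [Field K] (x : Fin 2 → K) (n : Fin 2 → ℤ) (k : ℤ) :
    mon x (k • n) = mon x n ^ k := by
  simp only [mon, ← Finset.prod_zpow]
  exact Finset.prod_congr rfl fun j _ => by
    rw [Pi.smul_apply, smul_eq_mul, mul_comm, zpow_mul]

lemma mon_mul {K : Type*} [Field K] (x y : Fin 2 → K) (n : Fin 2 → ℤ) :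
    mon (fun j => x j * y j) n = mon x n * mon y n := by
  simp only [mon, ← Finset.prod_mul_distrib]
  exact Finset.prod_congr rfl fun j _ => by rw [mul_zpow]

lemma mon_ofReal (x : Fin 2 → ℝ) (n : Fin 2 → ℤ) :
    mon (fun j => (x j : ℂ)) n = ((mon x n : ℝ) : ℂ) := by
  simp [mon]

lemma norm_mon_U (θ : TT) (n : Fin 2 → ℤ) : ‖mon (U θ) n‖ = 1 := by
  unfold mon
  rw [norm_prod]
  refine Finset.prod_eq_one fun j _ => ?_
  have : ‖U θ j‖ = 1 := Circle.norm_coe _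
  rw [norm_zpow, this, one_zpow]

lemma U_coe (x : Fin 2 → ℝ) (j : Fin 2) : U (fun j => (x j : AddCircle (2 * Real.pi))) j =
    Complex.exp (x j * I) := by
  simp only [U, AddCircle.toCircle_apply_mk]
  rw [div_self (by positivity), one_mul, Circle.coe_exp]

lemma U_add (θ τ : TT) (j : Fin 2) : U (θ + τ) j = U θ j * U τ j := by
  simp [U, AddCircle.toCircle_add]

lemma continuous_U (j : Fin 2) : Continuous fun θ => U θ j := by
  unfold U
  exact continuous_subtype_val.comp (AddCircle.continuous_toCircle.comp (continuous_apply j))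

lemma mem_coamoeba_iff (A : Finset (Fin 2 → ℤ)) (a : (Fin 2 → ℤ) → ℂ) (θ : TT) :
    (∃ z : Fin 2 → ℂ, (∀ j, z j ≠ 0) ∧ (∑ α ∈ A, a α * ∏ j, z j ^ (α j)) = 0 ∧
      ∀ j, θ j = ((z j).arg : AddCircle (2 * Real.pi))) ↔
    ∃ ρ : Fin 2 → ℝ, (∀ j, 0 < ρ j) ∧ ∑ α ∈ A, a α * mon (fun j => (ρ j : ℂ) * U θ j) α = 0 := by
  constructor
  · rintro ⟨z, hz, h0, hθ⟩
    refine ⟨fun j => ‖z j‖, fun j => norm_pos_iff.2 (hz j), ?_⟩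
    have : (fun j => ((‖z j‖ : ℝ) : ℂ) * U θ j) = z := by
      funext j
      have : θ = fun j => ((z j).arg : AddCircle (2 * Real.pi)) := funext hθ
      rw [this, U_coe, norm_mul_exp_arg_mul_I]
    rw [this]; exact h0
  · rintro ⟨ρ, hρ, h0⟩
    refine ⟨fun j => (ρ j : ℂ) * U θ j, fun j => mul_ne_zero (by exact_mod_cast (hρ j).ne')
      (U_ne θ j), h0, fun j => ?_⟩
    rw [arg_real_mul _ (hρ j)]
    obtain ⟨x, hx⟩ := QuotientAddGroup.mk_surjective (θ j)
    have h1 : U θ j = Complex.exp (x * I) := by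
      have := U_coe (fun _ => x) j
      rw [← this]; simp only [U]; rw [← hx]
    have h2 : ((arg (Complex.exp (x * I)) : ℝ) : Real.Angle) = (x : Real.Angle) := by
      rw [Complex.exp_mul_I]
      have := arg_cos_add_sin_mul_I_coe_angle (x : Real.Angle)
      simpa using this
    rw [h1]
    rw [← hx]
    exact h2.symm

lemma level_null (n : Fin 2 → ℤ) (hn : n ≠ 0) (w : ℂ) :
    MeasureTheory.volume {θ : TT | mon (U θ) n = w} = 0 := by
  by_contra hpos
  have hcont : Continuous fun θ : TT => mon (U θ) n := by
    unfold mon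
    exact continuous_finsetProd _ fun j _ => (continuous_U j).zpow₀ _ fun θ => Or.inl (U_ne θ j)
  have hc := MeasureTheory.Measure.countable_meas_level_set_pos
    (μ := (MeasureTheory.volume : MeasureTheory.Measure TT)) hcont.measurable
  obtain ⟨j, hj⟩ : ∃ j, n j ≠ 0 := by
    by_contra h; push Not at h; exact hn (funext h)
  have hw : w ≠ 0 := by
    rintro rfl
    apply hpos
    rw [show {θ : TT | mon (U θ) n = 0} = ∅ from ?_]
    · simp
    · ext θ; simp [mon_ne _ _ (U_ne θ)]
  have hmaps : Set.MapsTo (fun x : ℝ => Complex.exp (x * I) * w) (Set.Ioo (0 : ℝ) 1)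
      {t : ℂ | 0 < MeasureTheory.volume {θ : TT | mon (U θ) n = t}} := by
    intro x _
    let y : Fin 2 → ℝ := Pi.single j (x / n j)
    let τ : TT := fun j => (y j : AddCircle (2 * Real.pi))
    have hτ : mon (U τ) n = Complex.exp (x * I) := by
      have : mon (U τ) n = ∏ i, Complex.exp (y i * I) ^ n i := by
        unfold mon; exact Finset.prod_congr rfl fun i _ => by rw [U_coe]
      rw [this, Finset.prod_eq_single j]
      · rw [← Complex.exp_int_mul]
        congr 1
        have : (n j : ℂ) ≠ 0 := by exact_mod_cast hj
        simp [y]; field_simp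
      · intro i _ hi
        simp [y, hi]
      · simp
    have hset : (fun θ : TT => θ + τ) ⁻¹' {θ : TT | mon (U θ) n = Complex.exp (x * I) * w} =
        {θ : TT | mon (U θ) n = w} := by
      ext θ
      simp only [Set.mem_preimage, Set.mem_ofPred_eq]
      have : U (θ + τ) = fun j => U θ j * U τ j := funext (U_add θ τ)
      rw [this, mon_mul, hτ, mul_comm]
      exact mul_right_inj' (Complex.exp_ne_zero _)
    rw [Set.mem_ofPred_eq]
    rw [← MeasureTheory.measure_preimage_add_right MeasureTheory.volume τ, hset]
    exact pos_iff_ne_zero.2 hpos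
  have hinj : Set.InjOn (fun x : ℝ => Complex.exp (x * I) * w) (Set.Ioo (0 : ℝ) 1) := by
    intro x hx y hy hxy
    have h1 := mul_right_cancel₀ hw hxy
    have h2 := congrArg Complex.re h1
    rw [Complex.exp_ofReal_mul_I_re, Complex.exp_ofReal_mul_I_re] at h2
    have := Real.pi_gt_three
    exact Real.injOn_cos ⟨hx.1.le, by linarith [hx.2]⟩ ⟨hy.1.le, by linarith [hy.2]⟩ h2
  have hcount := hmaps.countable_of_injOn hinj hc
  have := hcount.measure_zero MeasureTheory.volume
  simp at this

lemma generic (n : Fin 2 → ℤ) (hn : n ≠ 0) (c : ℂ) (hc : c ≠ 0) :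
    ∀ᵐ θ : TT, (c * mon (U θ) n).im ≠ 0 := by
  have h2 : (2 : ℤ) • n ≠ 0 := smul_ne_zero (by norm_num) hn
  have := level_null _ h2 ((starRingEnd ℂ) c / c)
  rw [MeasureTheory.ae_iff]
  refine MeasureTheory.measure_mono_null ?_ this
  intro θ hθ
  simp only [Set.mem_ofPred_eq, not_not] at hθ ⊢
  rw [mon_smul]
  have h1 := Complex.conj_eq_iff_im.2 hθ
  rw [map_mul] at h1
  have h3 : mon (U θ) n * (starRingEnd ℂ) (mon (U θ) n) = 1 := by
    rw [Complex.mul_conj, Complex.normSq_eq_norm_sq, norm_mon_U]; simp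
  rw [eq_div_iff hc]
  have : mon (U θ) n ^ (2 : ℤ) = mon (U θ) n * mon (U θ) n := by
    rw [zpow_ofNat, sq]
  rw [this]
  linear_combination (-mon (U θ) n) * h1 + (starRingEnd ℂ) c * h3

/-- Half-period translations. -/
noncomputable def sh (s : Fin 2 → ℤˣ) : TT := fun j => ((if s j = 1 then 0 else Real.pi : ℝ) : AddCircle (2 * Real.pi))

lemma U_sh (s : Fin 2 → ℤˣ) (j : Fin 2) : U (sh s) j = ((s j : ℤ) : ℂ) := by
  unfold sh
  rw [U_coe]
  rcases Int.units_eq_one_or (s j) with h | h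
  · simp [h]
  · simp [h]

lemma vol_TT : MeasureTheory.volume (Set.univ : Set TT) = ENNReal.ofReal (4 * Real.pi ^ 2) := by
  rw [MeasureTheory.volume_pi, MeasureTheory.Measure.pi_univ]
  simp only [AddCircle.measure_univ, Fin.prod_univ_two]
  rw [← ENNReal.ofReal_mul (by positivity)]
  congr 1; ring

open Classical in
lemma averaging (C : Set TT) (hC : MeasurableSet C) (K : ℕ)
    (h : ∀ᵐ θ : TT, (Finset.univ.filter fun s : Fin 2 → ℤˣ => θ + sh s ∈ C).card ≤ K) :
    MeasureTheory.volume C ≤ ENNReal.ofReal (2 * Real.pi ^ 2) * ENNReal.ofReal (K / 2) := by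
  have h1 : ∀ s : Fin 2 → ℤˣ, MeasureTheory.volume C =
      ∫⁻ θ : TT, (if θ + sh s ∈ C then 1 else 0) := by
    intro s
    rw [← MeasureTheory.measure_preimage_add_right MeasureTheory.volume (sh s) C,
      ← MeasureTheory.lintegral_indicator_one ((measurable_add_const (sh s)) hC)]
    rfl
  have h2 : 4 * MeasureTheory.volume C ≤ K * ENNReal.ofReal (4 * Real.pi ^ 2) := by
    calc 4 * MeasureTheory.volume C = ∑ s : Fin 2 → ℤˣ, MeasureTheory.volume C := by
          simp
      _ = ∑ s : Fin 2 → ℤˣ, ∫⁻ θ : TT, (if θ + sh s ∈ C then 1 else 0) :=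
          Finset.sum_congr rfl fun s _ => h1 s
      _ = ∫⁻ θ : TT, ∑ s : Fin 2 → ℤˣ, (if θ + sh s ∈ C then 1 else 0) := by
          rw [MeasureTheory.lintegral_finsetSum]
          intro s _
          exact Measurable.ite ((measurable_add_const (sh s)) hC) measurable_const measurable_const
      _ ≤ ∫⁻ θ : TT, (K : ℝ≥0∞) := by
          apply MeasureTheory.lintegral_mono_ae
          filter_upwards [h] with θ hθ
          rw [Finset.sum_boole]
          exact_mod_cast hθ
      _ = K * ENNReal.ofReal (4 * Real.pi ^ 2) := by
          rw [MeasureTheory.lintegral_const, vol_TT]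
  have h3 : (4 : ℝ≥0∞) * (ENNReal.ofReal (2 * Real.pi ^ 2) * ENNReal.ofReal (K / 2)) =
      K * ENNReal.ofReal (4 * Real.pi ^ 2) := by
    rw [← ENNReal.ofReal_mul (by positivity), ← ENNReal.ofReal_natCast K,
      ← ENNReal.ofReal_mul (by positivity), ← ENNReal.ofReal_ofNat 4,
      ← ENNReal.ofReal_mul (by positivity)]
    congr 1; ring
  rw [← h3] at h2
  exact (ENNReal.mul_le_mul_iff_right (by norm_num) (by norm_num)).1 h2

/-- Reformulated coamoeba. -/
def CA (A : Finset (Fin 2 → ℤ)) (a : (Fin 2 → ℤ) → ℂ) : Set TT :=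
  {θ | ∃ ρ : Fin 2 → ℝ, (∀ j, 0 < ρ j) ∧ ∑ α ∈ A, a α * mon (fun j => (ρ j : ℂ) * U θ j) α = 0}

lemma measurable_CA (A : Finset (Fin 2 → ℤ)) (a : (Fin 2 → ℤ) → ℂ) : MeasurableSet (CA A a) := by
  let S : ℕ → Set ((Fin 2 → ℝ) × TT) := fun n =>
    (Set.pi Set.univ fun _ => Set.Icc (1 / ((n : ℝ) + 1)) (n + 1)) ×ˢ Set.univ
  let F : (Fin 2 → ℝ) × TT → ℂ := fun p => ∑ α ∈ A, a α * mon (fun j => (p.1 j : ℂ) * U p.2 j) α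
  have hS : ∀ n, IsCompact (S n) := fun n =>
    (isCompact_univ_pi fun _ => isCompact_Icc).prod isCompact_univ
  have hpos : ∀ n, ∀ p ∈ S n, ∀ j, 0 < p.1 j := by
    intro n p hp j
    have := (hp.1 j (Set.mem_univ _)).1
    exact lt_of_lt_of_le (by positivity) this
  have hF : ∀ n, ContinuousOn F (S n) := by
    intro n
    refine continuousOn_finsetSum _ fun α _ => continuousOn_const.mul ?_
    unfold mon
    refine continuousOn_finsetProd _ fun j _ => ?_
    refine ContinuousOn.zpow₀ ?_ _ fun p hp => Or.inl ?_
    · apply Continuous.continuousOn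
      refine Continuous.mul ?_ ((continuous_U j).comp continuous_snd)
      fun_prop
    · exact mul_ne_zero (by exact_mod_cast (hpos n p hp j).ne') (U_ne _ _)
  have hK : ∀ n, IsCompact (S n ∩ F ⁻¹' {0}) := fun n =>
    (hS n).of_isClosed_subset ((hF n).preimage_isClosed_of_isClosed (hS n).isClosed
      isClosed_singleton) Set.inter_subset_left
  have hU : CA A a = ⋃ n, Prod.snd '' (S n ∩ F ⁻¹' {0}) := by
    ext θ
    simp only [CA, Set.mem_ofPred_eq, Set.mem_iUnion, Set.mem_image]
    constructor
    · rintro ⟨ρ, hρ, h0⟩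
      have hex : ∀ x : ℝ, 0 < x → ∃ N : ℕ, ∀ n ≥ N, x ∈ Set.Icc (1 / ((n : ℝ) + 1)) (n + 1) := by
        intro x hx
        obtain ⟨N1, h1⟩ := exists_nat_ge x
        obtain ⟨N2, h2⟩ := exists_nat_ge (1 / x)
        refine ⟨max N1 N2, fun n hn => ⟨?_, ?_⟩⟩
        · have : (N2 : ℝ) ≤ n := by exact_mod_cast (le_max_right _ _).trans hn
          rw [div_le_iff₀ (by positivity)]
          rw [div_le_iff₀ hx] at h2
          nlinarith
        · have : (N1 : ℝ) ≤ n := by exact_mod_cast (le_max_left _ _).trans hn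
          linarith
      obtain ⟨N1, h1⟩ := hex _ (hρ 0)
      obtain ⟨N2, h2⟩ := hex _ (hρ 1)
      refine ⟨max N1 N2, (ρ, θ), ⟨⟨fun j _ => ?_, Set.mem_univ _⟩, h0⟩, rfl⟩
      fin_cases j
      · exact h1 _ (le_max_left _ _)
      · exact h2 _ (le_max_right _ _)
    · rintro ⟨n, ⟨ρ, θ'⟩, ⟨h1, h2⟩, rfl⟩
      exact ⟨ρ, hpos n _ h1, h2⟩
  rw [hU]
  exact MeasurableSet.iUnion fun n => ((hK n).image continuous_snd).isClosed.measurableSet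

lemma shift_mem (A : Finset (Fin 2 → ℤ)) (a : (Fin 2 → ℤ) → ℂ) (θ : TT) (s : Fin 2 → ℤˣ) :
    θ + sh s ∈ CA A a ↔ ∃ ρ : Fin 2 → ℝ, (∀ j, 0 < ρ j) ∧
      ∑ α ∈ A, a α * (((mon (fun j => ((s j : ℤ) : ℝ) * ρ j) α : ℝ) : ℂ) * mon (U θ) α) = 0 := by
  simp only [CA, Set.mem_ofPred_eq]
  refine exists_congr fun ρ => and_congr_right fun _ => ?_
  have : ∀ α, mon (fun j => (ρ j : ℂ) * U (θ + sh s) j) α =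
      ((mon (fun j => ((s j : ℤ) : ℝ) * ρ j) α : ℝ) : ℂ) * mon (U θ) α := by
    intro α
    rw [← mon_ofReal, ← mon_mul]
    congr 1
    funext j
    rw [U_add, U_sh]; push_cast; ring
  simp only [this]


lemma mon_sign (s : Fin 2 → ℤˣ) (ρ : Fin 2 → ℝ) (n : Fin 2 → ℤ) :
    mon (fun j => ((s j : ℤ) : ℝ) * ρ j) n = (((∏ j, s j ^ n j : ℤˣ) : ℤ) : ℝ) * mon ρ n := by
  rw [mon_mul]
  congr 1
  have h : ∀ (t : ℤˣ) (k : ℤ), (((t ^ k : ℤˣ) : ℤ) : ℝ) = ((t : ℤ) : ℝ) ^ k := by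
    intro t k
    have : ((Units.map (Int.castRingHom ℝ).toMonoidHom (t ^ k) : ℝˣ) : ℝ) =
      ((Units.map (Int.castRingHom ℝ).toMonoidHom t : ℝˣ) : ℝ) ^ k := by
      rw [map_zpow, Units.val_zpow_eq_zpow_val]
    exact this
  simp only [mon, Fin.prod_univ_two, Units.val_mul, Int.cast_mul, h]

lemma sign_exists (p q : Fin 2 → ℤ) (h : p 0 * q 1 - p 1 * q 0 = 1) (σ τ : ℤˣ) :
    ∃ s : Fin 2 → ℤˣ, ∏ j, s j ^ p j = σ ∧ ∏ j, s j ^ q j = τ := by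
  have key : ∀ x0 x1 y0 y1 a b : ℤ, (σ ^ x0 * τ ^ y0) ^ a * (σ ^ x1 * τ ^ y1) ^ b =
      σ ^ (x0 * a + x1 * b) * τ ^ (y0 * a + y1 * b) := by
    intro x0 x1 y0 y1 a b
    rw [mul_zpow, mul_zpow, zpow_add, zpow_add, zpow_mul, zpow_mul, zpow_mul, zpow_mul,
      mul_mul_mul_comm]
  refine ⟨![σ ^ q 1 * τ ^ (-p 1), σ ^ (-q 0) * τ ^ p 0], ?_, ?_⟩
  · simp only [Fin.prod_univ_two, Matrix.cons_val_zero, Matrix.cons_val_one]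
    rw [key, show q 1 * p 0 + -q 0 * p 1 = 1 by linarith,
      show -p 1 * p 0 + p 0 * p 1 = 0 by ring]
    simp
  · simp only [Fin.prod_univ_two, Matrix.cons_val_zero, Matrix.cons_val_one]
    rw [key, show q 1 * q 0 + -q 0 * q 1 = 0 by ring,
      show -p 1 * q 0 + p 0 * q 1 = 1 by linarith]
    simp

lemma mon_pos (ρ : Fin 2 → ℝ) (hρ : ∀ j, 0 < ρ j) (n : Fin 2 → ℤ) : 0 < mon ρ n :=
  Finset.prod_pos fun j _ => zpow_pos (hρ j) _

lemma tri_eq (A : Finset (Fin 2 → ℤ)) (a : (Fin 2 → ℤ) → ℂ) (P Q R C : Fin 2 → ℤ)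
    (hP : P ∈ A) (hQ : Q ∈ A) (hR : R ∈ A) (hPQ : P ≠ Q) (hPR : P ≠ R) (hQR : Q ≠ R)
    (hPC : P ≠ C) (hQC : Q ≠ C) (hRC : R ≠ C)
    (hall : ∀ X ∈ A, X = P ∨ X = Q ∨ X = R ∨ X = C)
    (θ : TT) : ∃ k : ℝ, ∀ x : Fin 2 → ℝ, (∀ j, x j ≠ 0) →
      ∑ α ∈ A, a α * (((mon x α : ℝ) : ℂ) * mon (U θ) α) = 0 →
      k + mon x (P - C) * ((starRingEnd ℂ (a R * mon (U θ) R)) * (a P * mon (U θ) P)).im +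
      mon x (Q - C) * ((starRingEnd ℂ (a R * mon (U θ) R)) * (a Q * mon (U θ) Q)).im = 0 := by
  have hsum : ∀ g : (Fin 2 → ℤ) → ℂ, ∑ α ∈ A, g α = g P + (g Q + (g R + (if C ∈ A then g C else 0))) := by
    intro g
    have : A = {P, Q, R, C} ∩ A := by
      symm
      rw [Finset.inter_eq_right]
      intro X hX
      simpa using hall X hX
    conv_lhs => rw [this]
    rw [← Finset.sum_ite_mem, Finset.sum_insert (by simp [hPQ, hPR, hPC]),
      Finset.sum_insert (by simp [hQR, hQC]), Finset.sum_insert (by simp [hRC]),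
      Finset.sum_singleton]
    simp [hP, hQ, hR]
  set c : ℂ := if C ∈ A then a C * mon (U θ) C else 0 with hc
  refine ⟨((starRingEnd ℂ (a R * mon (U θ) R)) * c).im, fun x hx h0 => ?_⟩
  rw [hsum] at h0
  have hM : ∀ X, mon x X = mon x (X - C) * mon x C := by
    intro X
    rw [← mon_add x _ _ hx, sub_add_cancel]
  have hMC := mon_ne x C hx
  have hMC' : ((mon x C : ℝ) : ℂ) ≠ 0 := by exact_mod_cast hMC
  have h1 : c + (mon x (P - C) : ℝ) * (a P * mon (U θ) P) + (mon x (Q - C) : ℝ) * (a Q * mon (U θ) Q)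
      + (mon x (R - C) : ℝ) * (a R * mon (U θ) R) = 0 := by
    apply mul_left_cancel₀ hMC'
    rw [mul_zero, ← h0, hM P, hM Q, hM R, hc]
    split_ifs <;> push_cast <;> ring
  have h2 := congrArg (fun w => ((starRingEnd ℂ (a R * mon (U θ) R)) * w).im) h1
  simp only [mul_add, Complex.add_im, mul_zero, Complex.zero_im] at h2
  have h3 : ∀ (r : ℝ) (w w' : ℂ), (w * (r * w')).im = r * (w * w').im := by
    intro r w w'
    rw [mul_left_comm, Complex.im_ofReal_mul]
  rw [h3, h3, h3] at h2
  have h4 : ∀ w : ℂ, ((starRingEnd ℂ w) * w).im = 0 := by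
    intro w; simp [Complex.mul_im]; ring
  rw [h4] at h2
  linarith

open Classical in
lemma tri_count (A : Finset (Fin 2 → ℤ)) (a : (Fin 2 → ℤ) → ℂ) (ha : ∀ α ∈ A, a α ≠ 0)
    (h : IsTri A) :
    ∀ᵐ θ : TT, (Finset.univ.filter fun s : Fin 2 → ℤˣ => θ + sh s ∈ CA A a).card ≤ 3 := by
  obtain ⟨P, Q, R, C, hP, hQ, hR, hs, hdet, hall⟩ := h
  have hs0 := hs 0
  have hs1 := hs 1
  have hPQ : P ≠ Q := by
    rintro rfl
    rw [show R 0 = 3 * C 0 - 2 * P 0 by omega, show R 1 = 3 * C 1 - 2 * P 1 by omega] at hdet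
    ring_nf at hdet; omega
  have hPR : P ≠ R := by
    rintro rfl
    rw [show Q 0 = 3 * C 0 - 2 * P 0 by omega, show Q 1 = 3 * C 1 - 2 * P 1 by omega] at hdet
    ring_nf at hdet; omega
  have hQR : Q ≠ R := by
    rintro rfl
    ring_nf at hdet; omega
  have hPC : P ≠ C := by
    rintro rfl
    rw [show Q 0 = 2 * P 0 - R 0 by omega, show Q 1 = 2 * P 1 - R 1 by omega] at hdet
    ring_nf at hdet; omega
  have hQC : Q ≠ C := by
    rintro rfl
    ring_nf at hdet; omega
  have hRC : R ≠ C := by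
    rintro rfl
    ring_nf at hdet; omega
  have hdet' : (P - C) 0 * (Q - C) 1 - (P - C) 1 * (Q - C) 0 = 1 := by
    simp only [Pi.sub_apply]
    rw [show P 0 = 3 * C 0 - Q 0 - R 0 by omega, show P 1 = 3 * C 1 - Q 1 - R 1 by omega]
    linarith
  filter_upwards [generic (P - R) (sub_ne_zero.2 hPR) ((starRingEnd ℂ (a R)) * a P)
    (mul_ne_zero ((map_ne_zero _).2 (ha R hR)) (ha P hP))] with θ hθ
  by_contra hcard
  push Not at hcard
  have huniv : ∀ s : Fin 2 → ℤˣ, θ + sh s ∈ CA A a := by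
    have : (Finset.univ.filter fun s : Fin 2 → ℤˣ => θ + sh s ∈ CA A a) = Finset.univ := by
      apply Finset.eq_univ_of_card
      apply le_antisymm (Finset.card_le_univ _)
      have : Fintype.card (Fin 2 → ℤˣ) = 4 := by simp
      omega
    intro s
    have := this ▸ Finset.mem_univ s
    simpa using this
  obtain ⟨k, hk⟩ := tri_eq A a P Q R C hP hQ hR hPQ hPR hQR hPC hQC hRC hall θ
  have hne : ((starRingEnd ℂ (a R * mon (U θ) R)) * (a P * mon (U θ) P)).im ≠ 0 := by
    intro h0
    apply hθ
    have h1 : mon (U θ) P = mon (U θ) (P - R) * mon (U θ) R := by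
      rw [← mon_add _ _ _ (U_ne θ), sub_add_cancel]
    have h3 : mon (U θ) R * (starRingEnd ℂ) (mon (U θ) R) = 1 := by
      rw [Complex.mul_conj, Complex.normSq_eq_norm_sq, norm_mon_U]; simp
    rw [← h0, h1, map_mul]
    congr 1
    linear_combination (-(starRingEnd ℂ (a R)) * a P * mon (U θ) (P - R)) * h3
  set p := ((starRingEnd ℂ (a R * mon (U θ) R)) * (a P * mon (U θ) P)).im
  set q := ((starRingEnd ℂ (a R * mon (U θ) R)) * (a Q * mon (U θ) Q)).im
  have main : ∀ σ τ : ℤˣ, ∃ x y : ℝ, 0 < x ∧ 0 < y ∧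
      k + ((σ : ℤ) : ℝ) * x * p + ((τ : ℤ) : ℝ) * y * q = 0 := by
    intro σ τ
    obtain ⟨s, h1, h2⟩ := sign_exists _ _ hdet' σ τ
    obtain ⟨ρ, hρ, h0⟩ := (shift_mem A a θ s).1 (huniv s)
    refine ⟨mon ρ (P - C), mon ρ (Q - C), mon_pos ρ hρ _, mon_pos ρ hρ _, ?_⟩
    have := hk _ (fun j => mul_ne_zero (by simp) (hρ j).ne') h0
    rw [mon_sign, mon_sign, h1, h2] at this
    exact this
  obtain ⟨x1, y1, hx1, hy1, e1⟩ := main 1 1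
  obtain ⟨x2, y2, hx2, hy2, e2⟩ := main (-1) (-1)
  obtain ⟨x3, y3, hx3, hy3, e3⟩ := main 1 (-1)
  obtain ⟨x4, y4, hx4, hy4, e4⟩ := main (-1) 1
  simp only [Units.val_one, Int.cast_one, one_mul, Units.val_neg, Int.cast_neg, neg_mul] at e1 e2 e3 e4
  have f1 : (x1 + x2) * p + (y1 + y2) * q = 0 := by linarith
  have f2 : (x3 + x4) * p - (y3 + y4) * q = 0 := by linarith
  have g : ((x1 + x2) * (y3 + y4) + (x3 + x4) * (y1 + y2)) * p = 0 := by
    linear_combination (y3 + y4) * f1 + (y1 + y2) * f2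
  rcases mul_eq_zero.1 g with g | g
  · have : 0 < (x1 + x2) * (y3 + y4) + (x3 + x4) * (y1 + y2) := by positivity
    linarith
  · exact hne g

/-- One-variable Laurent sums. -/
noncomputable def Lp {ι : Type*} (B : Finset ι) (J : ι → ℤ) (a : ι → ℂ) (z : ℂ) : ℂ :=
  ∑ α ∈ B, a α * z ^ J α

lemma Lp_generic {ι : Type*} (B : Finset ι) (hB : B.Nonempty) (J : ι → ℤ) (a : ι → ℂ)
    (hJ : Set.InjOn J B) (ha : ∀ α ∈ B, a α ≠ 0) (e : Fin 2 → ℤ) (he : e ≠ 0) :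
    ∀ᵐ θ : TT, ∀ t : ℝ, t ≠ 0 → Lp B J a (t * mon (U θ) e) ≠ 0 := by
  classical
  have hZ : {z : ℂ | z ≠ 0 ∧ Lp B J a z = 0}.Finite := by
    obtain ⟨α0, hα0, hmin⟩ := Finset.exists_min_image B J hB
    let Q : Polynomial ℂ := ∑ α ∈ B, Polynomial.C (a α) * Polynomial.X ^ (J α - J α0).toNat
    have hQ : Q ≠ 0 := by
      intro h
      have h1 : Q.coeff 0 = a α0 := by
        simp only [Q, Polynomial.finsetSum_coeff, Polynomial.coeff_C_mul_X_pow]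
        rw [Finset.sum_eq_single α0]
        · simp
        · intro β hβ hne
          rw [if_neg]
          intro h
          have := hmin β hβ
          exact hne (hJ hβ hα0 (by omega))
        · intro h; exact absurd hα0 h
      rw [h] at h1
      exact ha α0 hα0 (by simpa using h1.symm)
    refine (Q.roots.toFinset.finite_toSet).subset ?_
    rintro z ⟨hz, h0⟩
    simp only [Finset.mem_coe, Multiset.mem_toFinset, Polynomial.mem_roots hQ, Polynomial.IsRoot.def]
    have : Q.eval z = z ^ (-J α0) * Lp B J a z := by
      simp only [Q, Polynomial.eval_finsetSum, Lp, Finset.mul_sum, Polynomial.eval_mul, Polynomial.eval_C, Polynomial.eval_pow,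
        Polynomial.eval_X]
      refine Finset.sum_congr rfl fun α hα => ?_
      have := hmin α hα
      rw [← zpow_natCast z, Int.toNat_of_nonneg (by omega), sub_eq_add_neg, zpow_add₀ hz]
      ring
    rw [this, h0, mul_zero]
  have h1 : ∀ᵐ θ : TT, ∀ z ∈ {z : ℂ | z ≠ 0 ∧ Lp B J a z = 0},
      ((starRingEnd ℂ z) * mon (U θ) e).im ≠ 0 := by
    rw [MeasureTheory.ae_ball_iff hZ.countable]
    intro z hz
    exact generic e he _ ((map_ne_zero _).2 hz.1)
  filter_upwards [h1] with θ hθ t ht h0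
  refine hθ _ ⟨mul_ne_zero (by exact_mod_cast ht) (mon_ne _ _ (U_ne θ)), h0⟩ ?_
  simp [Complex.mul_im]; ring

lemma poly_bound {ι : Type*} (B0 B1 : Finset ι) (J : ι → ℤ) (a : ι → ℂ)
    (hJ0 : Set.InjOn J B0) (hJ1 : Set.InjOn J B1) (α0 α1 β0 β1 : ι)
    (hα1 : α1 ∈ B0) (hβ1 : β1 ∈ B1)
    (mα0 : ∀ α ∈ B0, J α0 ≤ J α) (mα1 : ∀ α ∈ B0, J α ≤ J α1)
    (mβ0 : ∀ α ∈ B1, J β0 ≤ J α) (mβ1 : ∀ α ∈ B1, J α ≤ J β1) (u v : ℂ)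
    (htop : (a α1 * u ^ J α1 * starRingEnd ℂ (a β1 * u ^ J β1) * starRingEnd ℂ v).im ≠ 0)
    (T : Finset ℝ) (hT : ∀ t ∈ T, t ≠ 0 ∧
      (Lp B0 J a (t * u) * starRingEnd ℂ (Lp B1 J a (t * u)) * starRingEnd ℂ v).im = 0) :
    T.card ≤ ((J α1 - J α0) + (J β1 - J β0)).toNat := by
  classical
  let c : ι → ι → ℝ := fun α β =>
    (a α * u ^ J α * starRingEnd ℂ (a β * u ^ J β) * starRingEnd ℂ v).im
  let N : ι → ι → ℕ := fun α β => ((J α - J α0) + (J β - J β0)).toNat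
  let R : Polynomial ℝ := ∑ α ∈ B0, ∑ β ∈ B1, Polynomial.C (c α β) * Polynomial.X ^ N α β
  have hdeg : R.natDegree ≤ N α1 β1 := by
    refine Polynomial.natDegree_sum_le_of_forall_le _ _ fun α hα => ?_
    refine Polynomial.natDegree_sum_le_of_forall_le _ _ fun β hβ => ?_
    refine (Polynomial.natDegree_C_mul_X_pow_le _ _).trans ?_
    have := mα1 α hα
    have := mβ1 β hβ
    simp only [N]; omega
  have hR : R ≠ 0 := by
    intro h
    have h1 : R.coeff (N α1 β1) = c α1 β1 := by
      simp only [R, Polynomial.finsetSum_coeff, Polynomial.coeff_C_mul_X_pow]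
      have hkey : ∀ α ∈ B0, ∀ β ∈ B1, N α1 β1 = N α β → α = α1 ∧ β = β1 := by
        intro α hα β hβ h
        have h1 := mα1 α hα
        have h2 := mβ1 β hβ
        have h3 := mα0 α hα
        have h4 := mβ0 β hβ
        simp only [N] at h
        exact ⟨hJ0 hα hα1 (by omega), hJ1 hβ hβ1 (by omega)⟩
      rw [Finset.sum_eq_single α1, Finset.sum_eq_single β1]
      · simp
      · intro β hβ hne
        rw [if_neg]
        intro h
        exact hne (hkey α1 hα1 β hβ h).2
      · intro h; exact absurd hβ1 h
      · intro α hα hne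
        refine Finset.sum_eq_zero fun β hβ => ?_
        rw [if_neg]
        intro h
        exact hne (hkey α hα β hβ h).1
      · intro h; exact absurd hα1 h
    rw [h] at h1
    rw [Polynomial.coeff_zero] at h1
    exact htop h1.symm
  have hsub : T ⊆ R.roots.toFinset := by
    intro t ht
    obtain ⟨ht0, h0⟩ := hT t ht
    simp only [Multiset.mem_toFinset, Polynomial.mem_roots hR, Polynomial.IsRoot.def]
    have : R.eval t = t ^ (-J α0 - J β0) *
        (Lp B0 J a (t * u) * starRingEnd ℂ (Lp B1 J a (t * u)) * starRingEnd ℂ v).im := by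
      have h1 : Lp B0 J a (t * u) * starRingEnd ℂ (Lp B1 J a (t * u)) * starRingEnd ℂ v =
          ∑ α ∈ B0, ∑ β ∈ B1, ((t ^ (J α + J β) : ℝ) : ℂ) *
            (a α * u ^ J α * starRingEnd ℂ (a β * u ^ J β) * starRingEnd ℂ v) := by
        simp only [Lp, map_sum, Finset.sum_mul, Finset.mul_sum]
        rw [Finset.sum_comm]
        refine Finset.sum_congr rfl fun α _ => Finset.sum_congr rfl fun β _ => ?_
        rw [zpow_add₀ ht0, mul_zpow, mul_zpow]
        simp only [map_mul, map_zpow₀, Complex.conj_ofReal]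
        push_cast
        ring
      rw [h1]
      simp only [R, Polynomial.eval_finsetSum, Complex.im_sum, Complex.im_ofReal_mul,
        Finset.mul_sum, Polynomial.eval_mul, Polynomial.eval_C, Polynomial.eval_pow,
        Polynomial.eval_X]
      refine Finset.sum_congr rfl fun α hα => Finset.sum_congr rfl fun β hβ => ?_
      have h3 := mα0 α hα
      have h4 := mβ0 β hβ
      rw [← zpow_natCast t, ← mul_assoc, ← zpow_add₀ ht0]
      simp only [N, c]
      rw [Int.toNat_of_nonneg (by omega), mul_comm]
      congr 2
      ring
    rw [this, h0, mul_zero]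
  calc T.card ≤ R.roots.toFinset.card := Finset.card_le_card hsub
    _ ≤ R.roots.card := Multiset.toFinset_card_le _
    _ ≤ R.natDegree := Polynomial.card_roots' _
    _ ≤ _ := hdeg


lemma real_recover (e e' : Fin 2 → ℤ) (hdet : e 0 * e' 1 - e 1 * e' 0 = 1) (x y : Fin 2 → ℝ)
    (hx : ∀ j, x j ≠ 0) (hy : ∀ j, y j ≠ 0) (h1 : mon x e = mon y e) (h2 : mon x e' = mon y e') :
    x = y := by
  have hm : ∀ (z : Fin 2 → ℝ), (∀ j, z j ≠ 0) → ∀ c d : ℤ,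
      mon z (c • e + d • e') = mon z e ^ c * mon z e' ^ d := by
    intro z hz c d
    rw [mon_add z _ _ hz, mon_smul, mon_smul]
  have hv0 : (e' 1 • e + (-e 1) • e' : Fin 2 → ℤ) = ![1, 0] := by
    funext j; fin_cases j
    · simp; linarith
    · simp; ring
  have hv1 : ((-e' 0) • e + (e 0) • e' : Fin 2 → ℤ) = ![0, 1] := by
    funext j; fin_cases j
    · simp; ring
    · simp; linarith
  funext j
  fin_cases j
  · have h3 := hm x hx (e' 1) (-e 1)
    have h4 := hm y hy (e' 1) (-e 1)
    rw [hv0] at h3 h4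
    rw [h1, h2, ← h4] at h3
    simpa [mon] using h3
  · have h3 := hm x hx (-e' 0) (e 0)
    have h4 := hm y hy (-e' 0) (e 0)
    rw [hv1] at h3 h4
    rw [h1, h2, ← h4] at h3
    simpa [mon] using h3

open Classical in
lemma strip_count (A : Finset (Fin 2 → ℤ)) (a : (Fin 2 → ℤ) → ℂ) (ha : ∀ α ∈ A, a α ≠ 0)
    (hA : A.Nonempty) (h : IsStrip A) :
    ∃ K : ℕ, (∀ᵐ θ : TT,
      (Finset.univ.filter fun s : Fin 2 → ℤˣ => θ + sh s ∈ CA A a).card ≤ K) ∧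
      ENNReal.ofReal (K / 2) ≤ MeasureTheory.volume
        (convexHull ℝ ((fun (α : Fin 2 → ℤ) (j : Fin 2) => (α j : ℝ)) '' A)) := by
  obtain ⟨e, e', P, hdet, hk⟩ := h
  let kk : (Fin 2 → ℤ) → ℤ := fun X => e 0 * (X 1 - P 1) - e 1 * (X 0 - P 0)
  let J : (Fin 2 → ℤ) → ℤ := fun X => (X 0 - P 0) * e' 1 - (X 1 - P 1) * e' 0
  have hX : ∀ X, X = P + (J X • e + kk X • e') := by
    intro X; funext j; fin_cases j
    · simp [J, kk]; linear_combination (-(X 0 - P 0)) * hdet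
    · simp [J, kk]; linear_combination (-(X 1 - P 1)) * hdet
  have he : e ≠ 0 := by
    rintro rfl; simp at hdet
  set A0 := A.filter (fun X => kk X = 0) with hA0
  set A1 := A.filter (fun X => kk X = 1) with hA1
  have hJ0 : Set.InjOn J A0 := by
    intro X hX' Y hY' hXY
    have h1 : kk X = 0 := by simp [hA0] at hX'; exact hX'.2
    have h2 : kk Y = 0 := by simp [hA0] at hY'; exact hY'.2
    rw [hX X, hX Y, hXY, h1, h2]
  have hJ1 : Set.InjOn J A1 := by
    intro X hX' Y hY' hXY
    have h1 : kk X = 1 := by simp [hA1] at hX'; exact hX'.2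
    have h2 : kk Y = 1 := by simp [hA1] at hY'; exact hY'.2
    rw [hX X, hX Y, hXY, h1, h2]
  have ha0 : ∀ α ∈ A0, a α ≠ 0 := fun α hα => ha α (Finset.mem_of_mem_filter α hα)
  have ha1 : ∀ α ∈ A1, a α ≠ 0 := fun α hα => ha α (Finset.mem_of_mem_filter α hα)
  -- the factored equation
  have heq : ∀ (θ : TT) (x : Fin 2 → ℝ), (∀ j, x j ≠ 0) →
      ∑ α ∈ A, a α * (((mon x α : ℝ) : ℂ) * mon (U θ) α) = 0 →
      Lp A0 J a ((mon x e : ℝ) * mon (U θ) e) +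
        (mon x e' : ℝ) * mon (U θ) e' * Lp A1 J a ((mon x e : ℝ) * mon (U θ) e) = 0 := by
    intro θ x hx h0
    have hmul : ∀ α, ((mon x α : ℝ) : ℂ) * mon (U θ) α = mon (fun j => (x j : ℂ) * U θ j) α := by
      intro α; rw [mon_mul, mon_ofReal]
    simp only [hmul] at h0
    rw [hmul, hmul]
    set w := fun j => (x j : ℂ) * U θ j
    have hw : ∀ j, w j ≠ 0 := fun j => mul_ne_zero (by exact_mod_cast hx j) (U_ne θ j)
    have hexp : ∀ α, mon w α = mon w P * (mon w e ^ J α * mon w e' ^ kk α) := by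
      intro α
      conv_lhs => rw [hX α]
      rw [mon_add w _ _ hw, mon_add w _ _ hw, mon_smul, mon_smul]
    apply mul_left_cancel₀ (mon_ne w P hw)
    rw [mul_zero, ← h0]
    have hsplit : A = A0 ∪ A1 := by
      ext X
      simp only [hA0, hA1, Finset.mem_union, Finset.mem_filter]
      have := hk X
      constructor
      · intro h; rcases this h with h' | h'
        · exact Or.inl ⟨h, h'⟩
        · exact Or.inr ⟨h, h'⟩
      · rintro (h | h) <;> exact h.1
    have hdisj : Disjoint A0 A1 := by
      rw [Finset.disjoint_left]
      intro X h1 h2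
      have h1 := (Finset.mem_filter.1 h1).2
      have h2 := (Finset.mem_filter.1 h2).2
      omega
    conv_rhs => rw [hsplit, Finset.sum_union hdisj]
    rw [mul_add]
    congr 1
    · rw [Lp, Finset.mul_sum]
      refine Finset.sum_congr rfl fun α hα => ?_
      rw [hexp α, (Finset.mem_filter.1 hα).2]; simp; ring
    · rw [Lp, Finset.mul_sum, Finset.mul_sum]
      refine Finset.sum_congr rfl fun α hα => ?_
      rw [hexp α, (Finset.mem_filter.1 hα).2]; simp; ring
  have hxne : ∀ (s : Fin 2 → ℤˣ) (ρ : Fin 2 → ℝ), (∀ j, 0 < ρ j) →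
      ∀ j, ((s j : ℤ) : ℝ) * ρ j ≠ 0 := fun s ρ hρ j => mul_ne_zero (by simp) (hρ j).ne'
  rcases A1.eq_empty_or_nonempty with h1e | h1n
  · -- only one line
    have h0n : A0.Nonempty := by
      obtain ⟨X, hXA⟩ := hA
      refine ⟨X, ?_⟩
      rw [hA0, Finset.mem_filter]
      refine ⟨hXA, (hk X hXA).resolve_right fun h => ?_⟩
      have : X ∈ A1 := Finset.mem_filter.2 ⟨hXA, h⟩
      simp [h1e] at this
    refine ⟨0, ?_, by simp⟩
    filter_upwards [Lp_generic A0 h0n J a hJ0 ha0 e he] with θ hθ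
    simp only [nonpos_iff_eq_zero, Finset.card_eq_zero, Finset.filter_eq_empty_iff]
    intro s _ hs
    obtain ⟨ρ, hρ, h0⟩ := (shift_mem A a θ s).1 hs
    have h2 := heq θ _ (hxne s ρ hρ) h0
    rw [h1e] at h2
    refine hθ _ (mon_ne _ e (hxne s ρ hρ)) ?_
    simpa [Lp] using h2
  rcases A0.eq_empty_or_nonempty with h0e | h0n
  · refine ⟨0, ?_, by simp⟩
    filter_upwards [Lp_generic A1 h1n J a hJ1 ha1 e he] with θ hθ
    simp only [nonpos_iff_eq_zero, Finset.card_eq_zero, Finset.filter_eq_empty_iff]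
    intro s _ hs
    obtain ⟨ρ, hρ, h0⟩ := (shift_mem A a θ s).1 hs
    have h2 := heq θ _ (hxne s ρ hρ) h0
    rw [h0e] at h2
    refine hθ _ (mon_ne _ e (hxne s ρ hρ)) ?_
    have h3 : Lp ∅ J a (((mon (fun j => ((s j : ℤ) : ℝ) * ρ j) e : ℝ) : ℂ) * mon (U θ) e) = 0 := by
      simp [Lp]
    rw [h3, zero_add] at h2
    refine (mul_eq_zero.1 h2).resolve_left (mul_ne_zero ?_ (mon_ne _ _ (U_ne θ)))
    exact_mod_cast mon_ne _ e' (hxne s ρ hρ)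
  obtain ⟨α0, hα0, mα0⟩ := Finset.exists_min_image A0 J h0n
  obtain ⟨α1, hα1, mα1⟩ := Finset.exists_max_image A0 J h0n
  obtain ⟨β0, hβ0, mβ0⟩ := Finset.exists_min_image A1 J h1n
  obtain ⟨β1, hβ1, mβ1⟩ := Finset.exists_max_image A1 J h1n
  refine ⟨((J α1 - J α0) + (J β1 - J β0)).toNat, ?_, ?_⟩
  · have hn : J α1 • e + ((-J β1) • e + (-1 : ℤ) • e') ≠ 0 := by
      intro h
      have h0 := congrFun h 0
      have h1 := congrFun h 1
      simp at h0 h1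
      have : e 0 * e' 1 - e 1 * e' 0 = 0 := by
        rw [show e' 1 = (J α1 - J β1) * e 1 by linarith, show e' 0 = (J α1 - J β1) * e 0 by linarith]
        ring
      omega
    filter_upwards [Lp_generic A1 h1n J a hJ1 ha1 e he,
      generic _ hn (a α1 * starRingEnd ℂ (a β1))
        (mul_ne_zero (ha0 α1 hα1) ((map_ne_zero _).2 (ha1 β1 hβ1)))] with θ hθ htop
    have hconj : ∀ n, starRingEnd ℂ (mon (U θ) n) = (mon (U θ) n)⁻¹ := by
      intro n
      rw [Complex.inv_def, Complex.normSq_eq_norm_sq, norm_mon_U]; simp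
    have htop' : (a α1 * mon (U θ) e ^ J α1 * starRingEnd ℂ (a β1 * mon (U θ) e ^ J β1) *
        starRingEnd ℂ (mon (U θ) e')).im ≠ 0 := by
      convert htop using 2
      rw [mon_add _ _ _ (U_ne θ), mon_add _ _ _ (U_ne θ), mon_smul, mon_smul, mon_smul, map_mul,
        map_zpow₀, hconj, hconj, inv_zpow', zpow_neg_one]
      ring
    have hch : ∀ s : Fin 2 → ℤˣ, ∃ ρ : Fin 2 → ℝ, θ + sh s ∈ CA A a → ((∀ j, 0 < ρ j) ∧
      ∑ α ∈ A, a α * (((mon (fun j => ((s j : ℤ) : ℝ) * ρ j) α : ℝ) : ℂ) * mon (U θ) α) = 0) := by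
      intro s
      by_cases hs : θ + sh s ∈ CA A a
      · obtain ⟨ρ, hρ⟩ := (shift_mem A a θ s).1 hs
        exact ⟨ρ, fun _ => hρ⟩
      · exact ⟨0, fun h => absurd h hs⟩
    choose ρ hρ using hch
    let x : (Fin 2 → ℤˣ) → Fin 2 → ℝ := fun s j => ((s j : ℤ) : ℝ) * ρ s j
    have hx : ∀ s, θ + sh s ∈ CA A a → ∀ j, x s j ≠ 0 := fun s hs => hxne s _ (hρ s hs).1
    have hE : ∀ s, θ + sh s ∈ CA A a → _ := fun s hs => heq θ (x s) (hx s hs) (hρ s hs).2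
    have hinj : Set.InjOn (fun s => mon (x s) e)
        (Finset.univ.filter fun s : Fin 2 → ℤˣ => θ + sh s ∈ CA A a) := by
      intro s hs s' hs' hss
      have hs : θ + sh s ∈ CA A a := by simpa using hs
      have hs' : θ + sh s' ∈ CA A a := by simpa using hs'
      have hss : mon (x s) e = mon (x s') e := hss
      have E1 := hE s hs
      have E2 := hE s' hs'
      rw [hss] at E1
      have hq := hθ _ (mon_ne _ e (hx s' hs'))
      have h3 : ((mon (x s) e' : ℝ) : ℂ) = ((mon (x s') e' : ℝ) : ℂ) := by
        apply mul_right_cancel₀ (mon_ne _ e' (U_ne θ))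
        apply mul_right_cancel₀ hq
        linear_combination E1 - E2
      have h4 := real_recover e e' hdet (x s) (x s') (hx s hs) (hx s' hs') hss
        (by exact_mod_cast h3)
      funext j
      have h5 := congrFun h4 j
      have p1 := (hρ s hs).1 j
      have p2 := (hρ s' hs').1 j
      simp only [x] at h5
      rcases Int.units_eq_one_or (s j) with h | h <;>
        rcases Int.units_eq_one_or (s' j) with h' | h' <;> rw [h, h'] at h5 ⊢ <;>
        simp at h5 <;> exfalso <;> linarith
    rw [← Finset.card_image_of_injOn hinj]
    refine poly_bound A0 A1 J a hJ0 hJ1 α0 α1 β0 β1 hα1 hβ1 mα0 mα1 mβ0 mβ1 _ _ htop' _ ?_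
    intro t ht
    obtain ⟨s, hs, rfl⟩ := Finset.mem_image.1 ht
    have hs : θ + sh s ∈ CA A a := by simpa using hs
    refine ⟨mon_ne _ e (hx s hs), ?_⟩
    have E1 := hE s hs
    have E2 := eq_neg_of_add_eq_zero_left E1
    rw [E2]
    set q := Lp A1 J a ((mon (x s) e : ℝ) * mon (U θ) e)
    set v := mon (U θ) e'
    have : -(((mon (x s) e' : ℝ) : ℂ) * v * q) * starRingEnd ℂ q * starRingEnd ℂ v =
        ((-(mon (x s) e') * Complex.normSq q * Complex.normSq v : ℝ) : ℂ) := by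
      push_cast
      rw [← Complex.mul_conj, ← Complex.mul_conj]; ring
    rw [this, Complex.ofReal_im]
  · have mem0 : ∀ X ∈ A0, X ∈ A ∧ kk X = 0 := fun X h => Finset.mem_filter.1 h
    have mem1 : ∀ X ∈ A1, X ∈ A ∧ kk X = 1 := fun X h => Finset.mem_filter.1 h
    have hc0 : ∀ X ∈ A0, ∀ j, X j = P j + J X * e j := by
      intro X h j
      have := congrFun (hX X) j
      rw [(mem0 X h).2] at this
      simpa using this
    have hc1 : ∀ X ∈ A1, ∀ j, X j = P j + J X * e j + e' j := by
      intro X h j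
      have := congrFun (hX X) j
      rw [(mem1 X h).2] at this
      simp at this
      linarith
    have d1 : dt α1 β0 α0 = J α1 - J α0 := by
      simp only [dt]
      rw [hc0 α1 hα1 0, hc0 α1 hα1 1, hc0 α0 hα0 0, hc0 α0 hα0 1, hc1 β0 hβ0 0, hc1 β0 hβ0 1]
      linear_combination (J α1 - J α0) * hdet
    have d2 : dt α1 β0 β1 = J β0 - J β1 := by
      simp only [dt]
      rw [hc0 α1 hα1 0, hc0 α1 hα1 1, hc1 β1 hβ1 0, hc1 β1 hβ1 1, hc1 β0 hβ0 0, hc1 β0 hβ0 1]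
      linear_combination (J β0 - J β1) * hdet
    have i1 := mα0 α1 hα1
    have i2 := mβ0 β1 hβ1
    exact area_int A α1 β0 α0 β1 (mem0 _ hα1).1 (mem1 _ hβ0).1 (mem0 _ hα0).1 (mem1 _ hβ1).1
      (by omega) (by omega) _ (by omega)

open Classical in
lemma main_count (A : Finset (Fin 2 → ℤ)) (a : (Fin 2 → ℤ) → ℂ) (ha : ∀ α ∈ A, a α ≠ 0)
    (hA : A.Nonempty) :
    ∃ K : ℕ, (∀ᵐ θ : TT,
      (Finset.univ.filter fun s : Fin 2 → ℤˣ => θ + sh s ∈ CA A a).card ≤ K) ∧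
      ENNReal.ofReal (K / 2) ≤ MeasureTheory.volume
        (convexHull ℝ ((fun (α : Fin 2 → ℤ) (j : Fin 2) => (α j : ℝ)) '' A)) := by
  rcases classify A hA with h | h | h
  · exact strip_count A a ha hA h
  · refine ⟨3, tri_count A a ha h, ?_⟩
    obtain ⟨P, Q, R, C, hP, hQ, hR, hs, hdet, hall⟩ := h
    have hs0 := hs 0
    have hs1 := hs 1
    have : dt P Q R = 3 := by
      simp only [dt]
      rw [show P 0 = 3 * C 0 - Q 0 - R 0 by omega, show P 1 = 3 * C 1 - Q 1 - R 1 by omega]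
      linear_combination 3 * hdet
    exact area_int A P Q R P hP hQ hR hP (by omega) (by simp [dt]) 3 (by simp [this]; simp [dt])
  · obtain ⟨X, Y, Z, W, hX, hY, hZ, hW, h1, h2, h3⟩ := h
    refine ⟨4, ?_, area_int A X Y Z W hX hY hZ hW h1 h2 4 (by exact_mod_cast h3)⟩
    refine Filter.Eventually.of_forall fun θ => ?_
    refine (Finset.card_le_univ _).trans ?_
    simp


/-- **Remark 5.17(2).** The Haar measure of the coamoeba of a complex algebraic plane
curve `V_f` in the torus `T² = (ℝ/2πℤ)²` is at most `2π² · Area(Δ_f)`, where `Δ_f`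
is the Newton polygon of `f`. -/
theorem coamoeba_area_le_of_plane_curve
    (A : Finset (Fin 2 → ℤ)) (hA : A.Nonempty)
    (a : (Fin 2 → ℤ) → ℂ) (ha : ∀ α ∈ A, a α ≠ 0)
    (Δ : Set (Fin 2 → ℝ))
    (hΔ : Δ = convexHull ℝ ((fun (α : Fin 2 → ℤ) (j : Fin 2) => (α j : ℝ)) '' A))
    (coAmoeba : Set (Fin 2 → AddCircle (2 * Real.pi)))
    (hcoAmoeba : coAmoeba = {θ : Fin 2 → AddCircle (2 * Real.pi) | ∃ z : Fin 2 → ℂ,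
      (∀ j, z j ≠ 0) ∧ (∑ α ∈ A, a α * ∏ j, z j ^ (α j)) = 0 ∧
      ∀ j, θ j = ((z j).arg : AddCircle (2 * Real.pi))}) :
    MeasureTheory.volume coAmoeba
      ≤ ENNReal.ofReal (2 * Real.pi ^ 2) * MeasureTheory.volume Δ := by
  have hC : coAmoeba = CA A a := by
    rw [hcoAmoeba]
    ext θ
    exact mem_coamoeba_iff A a θ
  rw [hC, hΔ]
  obtain ⟨K, h1, h2⟩ := main_count A a ha hA
  refine (averaging (CA A a) (measurable_CA A a) K h1).trans ?_
  gcongr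
end

section
/- Let 𝕂 be the field of generalized Puiseux series over ℂ with real exponents (Hahn series Σ_{j∈S} ξ_j t^j with ξ_j ∈ ℂ and S ⊆ ℝ well-ordered), with valuation val(a) = −min(supp a) for a ≠ 0. Let g(z) = Σ_{α∈A} a_α z^α be a Laurent polynomial over 𝕂 with finite nonempty support A ⊆ ℤⁿ and nonzero coefficients a_α ∈ 𝕂*. Then the closure in ℝⁿ of the set { (val(z₁), …, val(z_n)) : z ∈ (𝕂*)ⁿ, g(z) = 0 } equals the tropical hypersurface Γ_g = { x ∈ ℝⁿ : the maximum in max_{α∈A} ( val(a_α) + ⟨α, x⟩ ) is attained for at least two distinct α ∈ A }. (Theorem 2.3, Kapranov.) -/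
open Complex

namespace KapranovAux

open Polynomial

abbrev KK := HahnSeries ℝ ℂ

/-- The valuation ring. -/
def OO : Subring KK where
  carrier := {x | 0 ≤ x.orderTop}
  mul_mem' {x y} hx hy := by
    simp only [Set.mem_ofPred_eq] at *
    rw [HahnSeries.orderTop_mul]; exact add_nonneg hx hy
  one_mem' := by simp
  add_mem' {x y} hx hy := by
    simp only [Set.mem_ofPred_eq] at *
    exact (le_min hx hy).trans HahnSeries.min_orderTop_le_orderTop_add
  zero_mem' := by simp
  neg_mem' {x} hx := by simpa using hx

lemma mem_OO {x : KK} : x ∈ OO ↔ 0 ≤ x.orderTop := Iff.rfl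

lemma sub_C_pos {x : KK} (hx : x ∈ OO) : 0 < (x - HahnSeries.C (x.coeff 0)).orderTop := by
  by_contra h
  rw [not_lt] at h
  rcases h.lt_or_eq with h | h
  · obtain ⟨i, hi, h2⟩ := HahnSeries.orderTop_lt_iff_exists.1 h
    have hi' : i < 0 := by exact_mod_cast hi
    apply h2
    have : x.coeff i = 0 := HahnSeries.coeff_eq_zero_of_lt_orderTop (lt_of_lt_of_le hi hx)
    simp [this, HahnSeries.C_apply, HahnSeries.coeff_single_of_ne hi'.ne]
  · exact HahnSeries.coeff_orderTop_ne (x := x - HahnSeries.C (x.coeff 0)) (g := 0) (by exact_mod_cast h) (by simp [HahnSeries.C_apply])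

lemma coeff_zero_of_pos {x : KK} (hx : 0 < x.orderTop) : x.coeff 0 = 0 :=
  HahnSeries.coeff_eq_zero_of_lt_orderTop (by simpa using hx)

lemma coeff_zero_mul {x y : KK} (hx : x ∈ OO) (hy : y ∈ OO) :
    (x * y).coeff 0 = x.coeff 0 * y.coeff 0 := by
  have h1 := sub_C_pos hx
  have h2 := sub_C_pos hy
  set x' := x - HahnSeries.C (x.coeff 0) with hx'
  set y' := y - HahnSeries.C (y.coeff 0) with hy'
  have e : x * y = HahnSeries.C (x.coeff 0 * y.coeff 0) + (HahnSeries.C (x.coeff 0) * y' + x' * y) := by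
    rw [hx', hy', map_mul]; ring
  rw [e, HahnSeries.coeff_add, HahnSeries.coeff_add, coeff_zero_of_pos (x := x' * y), 
    HahnSeries.C_apply, HahnSeries.C_apply,
    HahnSeries.coeff_single_zero_mul, coeff_zero_of_pos h2]
  · simp
  · rw [HahnSeries.orderTop_mul]; exact add_pos_of_pos_of_nonneg h1 hy

/-- The residue map. -/
def res : OO →+* ℂ where
  toFun x := (x : KK).coeff 0
  map_one' := by simp
  map_zero' := by simp
  map_add' x y := by simp
  map_mul' x y := coeff_zero_mul x.2 y.2

lemma res_apply (x : OO) : res x = (x : KK).coeff 0 := rfl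

/-- Constants. -/
noncomputable def cst (c : ℂ) : OO := ⟨HahnSeries.C c, by
  rw [mem_OO, HahnSeries.C_apply]; exact_mod_cast HahnSeries.orderTop_single_le⟩

lemma res_cst (c : ℂ) : res (cst c) = c := by simp [res_apply, cst, HahnSeries.C_apply]

lemma res_eq_zero_iff (x : OO) : res x = 0 ↔ 0 < (x : KK).orderTop := by
  refine ⟨fun h => ?_, coeff_zero_of_pos⟩
  have := sub_C_pos x.2
  rw [← res_apply, h] at this
  simpa using this

lemma isUnit_of_res {x : OO} (h : res x ≠ 0) : IsUnit x := by
  have hx0 : (x : KK) ≠ 0 := by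
    rintro h0; apply h; simp [res_apply, h0]
  have ho : (x : KK).orderTop = 0 := by
    refine le_antisymm ?_ x.2
    rw [Ne, res_eq_zero_iff, not_lt] at h; exact h
  have hinv : (x : KK)⁻¹ ∈ OO := by
    have : ((x : KK) * (x : KK)⁻¹).orderTop = 0 := by
      rw [mul_inv_cancel₀ hx0]; simp
    rw [HahnSeries.orderTop_mul, ho, zero_add] at this
    rw [mem_OO, this]
  exact IsUnit.of_mul_eq_one ⟨_, hinv⟩ (by ext1; simp [hx0])

/-- The monomial. -/
noncomputable def tt (e : ℝ) (he : 0 ≤ e) : OO := ⟨HahnSeries.single e 1, by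
  rw [mem_OO, HahnSeries.orderTop_single one_ne_zero]; exact_mod_cast he⟩

lemma mem_span_tt (e : ℝ) (he : 0 ≤ e) (x : OO) :
    x ∈ Ideal.span {tt e he} ↔ (e : WithTop ℝ) ≤ (x : KK).orderTop := by
  rw [Ideal.mem_span_singleton']
  constructor
  · rintro ⟨a, rfl⟩
    have := a.2
    rw [mem_OO] at this
    simp only [tt, Subring.coe_mul, HahnSeries.orderTop_mul]
    rw [HahnSeries.orderTop_single one_ne_zero]
    exact le_add_of_nonneg_left this
  · intro h
    refine ⟨⟨(x : KK) * HahnSeries.single (-e) 1, ?_⟩, ?_⟩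
    · rw [mem_OO, HahnSeries.orderTop_mul, HahnSeries.orderTop_single one_ne_zero]
      have := add_le_add_left h ((-e : ℝ) : WithTop ℝ)
      refine le_trans ?_ this
      rw [← WithTop.coe_add]; simp
    · ext1
      simp [tt, mul_assoc, HahnSeries.single_mul_single]

lemma tt_pow (e : ℝ) (he : 0 ≤ e) (n : ℕ) : Ideal.span {tt e he} ^ n =
    Ideal.span {tt (n * e) (by positivity)} := by
  rw [Ideal.span_singleton_pow]
  congr 2
  ext1
  simp [tt, HahnSeries.single_pow]

lemma le_orderTop_real {x : KK} {e : ℝ} :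
    (e : WithTop ℝ) ≤ x.orderTop ↔ ∀ g < e, x.coeff g = 0 := by
  rw [HahnSeries.le_orderTop_iff_forall]
  simp

lemma mem_pow (e : ℝ) (he : 0 ≤ e) (n : ℕ) (x : OO) : x ∈ Ideal.span {tt e he} ^ n ↔
    ∀ g < n * e, (x : KK).coeff g = 0 := by
  rw [tt_pow, mem_span_tt, le_orderTop_real]

lemma isAdicComplete_tt (e : ℝ) (he : 0 < e) :
    IsAdicComplete (Ideal.span {tt e he.le}) OO where
  haus' x hx := by
    ext g
    obtain ⟨n, hn⟩ := exists_nat_gt (g / e)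
    rw [div_lt_iff₀ he] at hn
    have := hx n
    rw [SModEq.zero, smul_eq_mul, Ideal.mul_top, mem_pow] at this
    simpa using this g hn
  prec' f hf := by
    have key : ∀ m n : ℕ, m ≤ n → ∀ g < (m : ℝ) * e, (f m : KK).coeff g = (f n : KK).coeff g := by
      intro m n hmn g hg
      have := hf hmn
      rw [SModEq.sub_mem, smul_eq_mul, Ideal.mul_top, mem_pow] at this
      simpa [sub_eq_zero] using this g hg
    have hN : ∀ g : ℝ, ∃ n : ℕ, g < n * e := fun g => by
      obtain ⟨n, hn⟩ := exists_nat_gt (g / e)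
      exact ⟨n, by rwa [div_lt_iff₀ he] at hn⟩
    choose N hN using hN
    have key2 : ∀ (n : ℕ) (g : ℝ), g < (n : ℝ) * e → (f (N g) : KK).coeff g = (f n : KK).coeff g := by
      intro n g hg
      rcases le_total n (N g) with h | h
      · exact (key _ _ h g hg).symm
      · exact key _ _ h g (hN g)
    let L : KK :=
      { coeff := fun g => (f (N g) : KK).coeff g
        isPWO_support' := by
          rw [Set.isPWO_iff_isWF, Set.isWF_iff_no_descending_seq]
          intro s hs hmem
          have hw := (f (N (s 0)) : KK).isPWO_support
          rw [Set.isPWO_iff_isWF, Set.isWF_iff_no_descending_seq] at hw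
          refine hw s hs (fun i => ?_)
          have := hmem i
          rw [Function.mem_support, key2 (N (s 0)) _ (lt_of_le_of_lt (hs.antitone (Nat.zero_le i)) (hN (s 0)))] at this
          exact this }
    have hL : ∀ (n : ℕ) (g : ℝ), g < (n : ℝ) * e → L.coeff g = (f n : KK).coeff g := key2
    have hLO : L ∈ OO := by
      rw [mem_OO]
      change ((0 : ℝ) : WithTop ℝ) ≤ _
      rw [le_orderTop_real]
      intro g hg
      exact le_orderTop_real.1 (f (N g)).2 g hg
    refine ⟨⟨L, hLO⟩, fun n => ?_⟩
    rw [SModEq.sub_mem, smul_eq_mul, Ideal.mul_top, mem_pow]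
    intro g hg
    simp [hL n g hg]

lemma exists_eps (k : ℕ) (u : ℕ → KK) (hu : ∀ i < k, 0 < (u i).orderTop) :
    ∃ e : ℝ, 0 < e ∧ ∀ i < k, (e : WithTop ℝ) ≤ (u i).orderTop := by
  induction k with
  | zero => exact ⟨1, one_pos, by simp⟩
  | succ k ih =>
    obtain ⟨e, he, h⟩ := ih (fun i hi => hu i (by omega))
    have hk := hu k (by omega)
    obtain ⟨e', he', h'⟩ : ∃ e' : ℝ, 0 < e' ∧ (e' : WithTop ℝ) ≤ (u k).orderTop := by
      cases hc : (u k).orderTop with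
      | top => exact ⟨1, one_pos, le_top⟩
      | coe r => exact ⟨r, by rw [hc] at hk; exact_mod_cast hk, le_rfl⟩
    refine ⟨min e e', lt_min he he', fun i hi => ?_⟩
    rcases Nat.lt_succ_iff_lt_or_eq.1 hi with h1 | rfl
    · exact le_trans (by exact_mod_cast min_le_left _ _) (h i h1)
    · exact le_trans (by exact_mod_cast min_le_right _ _) h'

lemma exists_factor (f : OO[X]) (k : ℕ) (h0 : ∀ i < k, res (f.coeff i) = 0)
    (hk : res (f.coeff k) ≠ 0) :
    ∃ P : OO[X], P.Monic ∧ P.natDegree = k ∧ P ∣ f ∧ ∀ i < k, res (P.coeff i) = 0 := by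
  obtain ⟨e, he, hle⟩ := exists_eps k (fun i => (f.coeff i : KK))
    (fun i hi => (res_eq_zero_iff _).1 (h0 i hi))
  set I : Ideal OO := Ideal.span {tt e he.le} with hI
  have : IsAdicComplete I OO := isAdicComplete_tt e he
  have hres : ∀ x ∈ I, res x = 0 := by
    intro x hx
    rw [hI, mem_span_tt] at hx
    rw [res_eq_zero_iff]
    exact lt_of_lt_of_le (by exact_mod_cast he) hx
  have hord : ((f : PowerSeries OO).map (Ideal.Quotient.mk I)).order = k := by
    rw [PowerSeries.order_eq_nat]
    constructor
    · rw [PowerSeries.coeff_map, Polynomial.coeff_coe, Ne, Ideal.Quotient.eq_zero_iff_mem]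
      exact fun h => hk (hres _ h)
    · intro i hi
      rw [PowerSeries.coeff_map, Polynomial.coeff_coe, Ideal.Quotient.eq_zero_iff_mem, hI, mem_span_tt]
      exact hle i hi
  have H : (f : PowerSeries OO).IsWeierstrassDivisorAt I := by
    rw [PowerSeries.IsWeierstrassDivisorAt, hord]
    simpa using isUnit_of_res hk
  have D := H.isWeierstrassDivisionAt_div_mod (PowerSeries.X ^ k)
  set q := H.div (PowerSeries.X ^ k)
  set r := H.mod (PowerSeries.X ^ k)
  have hdeg : r.degree < k := by simpa [hord] using D.degree_lt
  have hmon : (X ^ k - r : OO[X]).Monic := monic_X_pow_sub hdeg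
  have hnat : (X ^ k - r : OO[X]).natDegree = k := by
    apply natDegree_eq_of_degree_eq_some
    rw [degree_sub_eq_left_of_degree_lt] <;> simp [hdeg]
  refine ⟨X ^ k - r, hmon, hnat, ?_, fun i hi => ?_⟩
  · rw [← Polynomial.modByMonic_eq_zero_iff_dvd hmon]
    have hdm := Polynomial.modByMonic_add_div f (X ^ k - r)
    have hlt : (f %ₘ (X ^ k - r)).degree < k := by
      refine (degree_modByMonic_lt f hmon).trans_eq ?_
      rw [degree_eq_natDegree hmon.ne_zero, hnat]
    refine (H.eq_zero_of_mul_eq (q := 1 - q * ((f /ₘ (X ^ k - r) : OO[X]) : PowerSeries OO))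
      (r := f %ₘ (X ^ k - r)) (by rw [hord]; simpa using hlt) ?_).2
    have h1 : ((X ^ k - r : OO[X]) : PowerSeries OO) = f * q := by
      have := D.eq_mul_add
      rw [Polynomial.coe_sub, Polynomial.coe_pow, Polynomial.coe_X, this]; ring
    have h2 := congrArg (fun p : OO[X] => (p : PowerSeries OO)) hdm
    simp only [Polynomial.coe_add, Polynomial.coe_mul, h1] at h2
    linear_combination -h2
  · have := D.coeff_f_sub_r_mem (i := i) (by rw [hord]; simpa using hi)
    have h3 := hres _ this
    simpa [PowerSeries.coeff_X_pow, Polynomial.coeff_X_pow] using h3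

/-- If the reduction vanishes at `c`, factor off the distinguished part. -/
lemma exists_factor_root (f : OO[X]) (hf : f.map res ≠ 0) (c : ℂ) :
    ∃ P : OO[X], P.Monic ∧ P.natDegree = (f.map res).rootMultiplicity c ∧
      P ∣ taylor (cst c) f ∧ ∀ i < P.natDegree, res (P.coeff i) = 0 := by
  have hm : (taylor (cst c) f).map res = taylor c (f.map res) := by
    rw [map_taylor, res_cst]
  have hk : (f.map res).rootMultiplicity c = (taylor c (f.map res)).natTrailingDegree := by
    rw [rootMultiplicity_eq_natTrailingDegree, taylor_apply]
  have hne : taylor c (f.map res) ≠ 0 := by simpa [taylor_eq_zero] using hf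
  obtain ⟨P, h1, h2, h3, h4⟩ := exists_factor (taylor (cst c) f) ((f.map res).rootMultiplicity c)
    (fun i hi => by
      rw [← coeff_map, hm]
      exact coeff_eq_zero_of_lt_natTrailingDegree (hk ▸ hi))
    (by
      rw [← coeff_map, hm, hk]
      exact mt trailingCoeff_eq_zero.1 hne)
  exact ⟨P, h1, h2, h3, by rwa [h2]⟩

lemma exists_lift (p : KK[X]) (h : ∀ i, p.coeff i ∈ OO) : ∃ f : OO[X], f.map OO.subtype = p := by
  have : p ∈ Polynomial.lifts OO.subtype := by
    rw [Polynomial.lifts_iff_coeff_lifts]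
    intro n; simpa using h n
  exact (Polynomial.mem_lifts p).1 this

lemma exists_root_aux (d : ℕ) : ∀ p : KK[X], p.Monic → p.natDegree = d → 0 < d →
    ∃ x, p.eval x = 0 := by
  induction d using Nat.strong_induction_on with
  | _ d ih =>
  intro p hp hd hd0
  -- step 1: depressed and integral polynomials
  have step : ∀ f : OO[X], f.Monic → f.natDegree = d → res (f.coeff (d - 1)) = 0 →
      (∃ i < d, res (f.coeff i) ≠ 0) → ∃ x, (f.map OO.subtype).eval x = 0 := by
    intro f hf hfd h1 ⟨i, hid, hi⟩
    have hmon : (f.map res).Monic := hf.map res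
    have hnd : (f.map res).natDegree = d := by rw [hf.natDegree_map, hfd]
    obtain ⟨c, hc⟩ := IsAlgClosed.exists_root (f.map res) (by
      rw [degree_eq_natDegree hmon.ne_zero, hnd]; exact_mod_cast hd0.ne')
    obtain ⟨P, hP1, hP2, hP3, -⟩ := exists_factor_root f hmon.ne_zero c
    have hpos : 0 < P.natDegree := by
      rw [hP2]; exact (rootMultiplicity_pos hmon.ne_zero).2 hc
    have hlt : P.natDegree < d := by
      by_contra hge
      rw [not_lt, hP2] at hge
      have hdvd : (X - C c) ^ d ∣ f.map res :=
        (le_rootMultiplicity_iff hmon.ne_zero).1 hge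
      have heq : f.map res = (X - C c) ^ d := by
        refine eq_of_monic_of_dvd_of_natDegree_le ((monic_X_sub_C c).pow d) hmon hdvd ?_
        rw [hnd, natDegree_pow, natDegree_X_sub_C, mul_one]
      have hcz : c = 0 := by
        have e1 : (f.map res).nextCoeff = 0 := by
          rw [nextCoeff_of_natDegree_pos (by omega), hnd, coeff_map, h1]
        rw [heq, (monic_X_sub_C c).nextCoeff_pow, nextCoeff_X_sub_C] at e1
        have : d ≠ 0 := hd0.ne'
        simpa [this] using e1
      apply hi
      rw [← coeff_map, heq, hcz]
      simp [coeff_X_pow, hid.ne]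
    obtain ⟨y, hy⟩ := ih P.natDegree hlt (P.map OO.subtype) (hP1.map _)
      (hP1.natDegree_map _) hpos
    refine ⟨y + OO.subtype (cst c), ?_⟩
    rw [← taylor_eval, ← map_taylor]
    obtain ⟨Q, hQ⟩ := hP3
    rw [hQ, Polynomial.map_mul, eval_mul, hy, zero_mul]
  -- step 2: depressed polynomials
  have step2 : ∀ p : KK[X], p.Monic → p.natDegree = d → p.coeff (d - 1) = 0 →
      ∃ x, p.eval x = 0 := by
    intro p hp hpd h1
    by_cases hz : ∀ i < d, p.coeff i = 0
    · refine ⟨0, ?_⟩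
      rw [← coeff_zero_eq_eval_zero]; exact hz 0 hd0
    push Not at hz
    obtain ⟨i₁, hi₁, hi₁'⟩ := hz
    classical
    let S := (Finset.range d).filter (fun i => p.coeff i ≠ 0)
    obtain ⟨j, hjS, hj⟩ := S.exists_min_image (fun i => (p.coeff i).order / ((d - i : ℕ) : ℝ))
      ⟨i₁, by simp [S, hi₁, hi₁']⟩
    simp only [S, Finset.mem_filter, Finset.mem_range] at hjS hj
    set γ : ℝ := (p.coeff j).order / ((d - j : ℕ) : ℝ) with hγ
    set s : KK := HahnSeries.single (-γ) 1 with hs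
    have hs0 : s ≠ 0 := HahnSeries.single_ne_zero one_ne_zero
    have hco : ∀ i, p.coeff i ≠ 0 →
        ((p.scaleRoots s).coeff i).orderTop = (((p.coeff i).order - ((d - i : ℕ) : ℝ) * γ : ℝ) : WithTop ℝ) := by
      intro i hi
      rw [coeff_scaleRoots, hpd, HahnSeries.orderTop_mul, hs, HahnSeries.single_pow, one_pow,
        HahnSeries.orderTop_single one_ne_zero, ← HahnSeries.order_eq_orderTop_of_ne_zero hi,
        ← WithTop.coe_add]
      congr 1
      simp; ring
    obtain ⟨f, hf⟩ := exists_lift (p.scaleRoots s) (by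
      intro i
      rw [mem_OO]
      by_cases hi : p.coeff i = 0
      · simp [coeff_scaleRoots, hi]
      rw [hco i hi]
      norm_cast
      rcases lt_or_ge i d with h | h
      · have := hj i ⟨h, hi⟩
        rw [le_div_iff₀ (by exact_mod_cast Nat.sub_pos_of_lt h)] at this
        linarith
      · have : i = d := le_antisymm (hpd ▸ le_natDegree_of_ne_zero hi) h
        subst this
        have : p.coeff i = 1 := by rw [← hpd]; exact hp
        simp [this])
    have hinj : Function.Injective OO.subtype := Subtype.val_injective
    have hfm : f.Monic := by
      apply Polynomial.monic_of_injective hinj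
      rw [hf, monic_scaleRoots_iff]; exact hp
    have hfd : f.natDegree = d := by
      rw [← natDegree_map_eq_of_injective hinj, hf, natDegree_scaleRoots, hpd]
    have hcf : ∀ i, (f.coeff i : KK) = (p.scaleRoots s).coeff i := by
      intro i; rw [← hf, coeff_map]; rfl
    obtain ⟨x, hx⟩ := step f hfm hfd (by
        have : f.coeff (d - 1) = 0 := by
          ext1; rw [hcf, coeff_scaleRoots, h1]; simp
        rw [this, map_zero])
      ⟨j, hjS.1, by
        rw [Ne, res_eq_zero_iff, hcf, hco j hjS.2, hγ]
        have : (((d - j : ℕ) : ℝ)) ≠ 0 := by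
          exact_mod_cast (Nat.sub_pos_of_lt hjS.1).ne'
        rw [mul_div_cancel₀ _ this]
        simp⟩
    refine ⟨s⁻¹ * x, ?_⟩
    have h3 := scaleRoots_eval_mul p (s⁻¹ * x) s
    rw [mul_inv_cancel_left₀ hs0, ← hf, hx] at h3
    have := (mul_eq_zero.1 h3.symm)
    exact this.resolve_left (pow_ne_zero _ hs0)
  -- step 3: depress
  have hdK : (d : KK) ≠ 0 := by
    rw [← HahnSeries.single_zero_natCast]
    exact HahnSeries.single_ne_zero (by exact_mod_cast hd0.ne')
  set b : KK := -(p.coeff (d - 1)) / d with hb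
  obtain ⟨x, hx⟩ := step2 (taylor b p) (by
      rw [Monic, leadingCoeff_taylor]; exact hp) (by rw [natDegree_taylor, hd]) (by
      obtain ⟨e, rfl⟩ : ∃ e, d = e + 1 := ⟨d - 1, by omega⟩
      have h1 : p.coeff (e + 1) = 1 := by rw [← hd]; exact hp
      rw [Nat.add_sub_cancel, taylor_coeff,
        eval_eq_sum_range' (n := 2) (by
          have := natDegree_hasseDeriv_le p e
          omega), Finset.sum_range_succ, Finset.sum_range_one, hasseDeriv_coeff, hasseDeriv_coeff,
        add_comm 1 e, h1, hb, Nat.add_sub_cancel]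
      simp only [zero_add, Nat.choose_self, Nat.choose_succ_self_right]
      field_simp
      simp)
  exact ⟨x + b, by rw [← taylor_eval, hx]⟩

instance : IsAlgClosed KK := by
  apply IsAlgClosed.of_exists_root
  intro p hp hirr
  exact exists_root_aux _ p hp rfl hirr.natDegree_pos

lemma exists_ne_zero_root (f : ℂ[X]) (i j : ℕ) (hij : i ≠ j) (hi : f.coeff i ≠ 0)
    (hj : f.coeff j ≠ 0) : ∃ c, c ≠ 0 ∧ f.eval c = 0 := by
  have hf : f ≠ 0 := by rintro rfl; simp at hi
  obtain ⟨h, hh, hnd⟩ := exists_eq_pow_rootMultiplicity_mul_and_not_dvd f hf 0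
  set k := f.rootMultiplicity 0
  rw [C_0, sub_zero] at hh hnd
  by_cases hdeg : h.degree = 0
  · exfalso
    rw [eq_C_of_degree_eq_zero hdeg] at hh
    rw [hh] at hi hj
    rw [mul_comm, coeff_C_mul_X_pow] at hi hj
    simp only [ne_eq, ite_eq_right_iff, not_forall] at hi hj
    exact hij (hi.1.trans hj.1.symm)
  · obtain ⟨c, hc⟩ := IsAlgClosed.exists_root h hdeg
    refine ⟨c, ?_, by rw [hh, eval_mul, hc, mul_zero]⟩
    rintro rfl
    apply hnd
    have := dvd_iff_isRoot.2 hc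
    simpa using this

lemma root_pos (P : OO[X]) (hP : P.Monic) (h : ∀ i < P.natDegree, res (P.coeff i) = 0)
    (y : KK) (hy : (P.map OO.subtype).eval y = 0) : 0 < y.orderTop := by
  by_contra hle
  rw [not_lt] at hle
  have hy0 : y ≠ 0 := by rintro rfl; simp at hle
  have hu : y⁻¹ ∈ OO := by
    have : (y * y⁻¹).orderTop = 0 := by
      rw [mul_inv_cancel₀ hy0]; simp
    rw [HahnSeries.orderTop_mul] at this
    rw [mem_OO, ← this]
    exact add_le_of_nonpos_left hle
  let u : OO := ⟨y⁻¹, hu⟩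
  set k := P.natDegree with hk
  have key : ∑ i ∈ Finset.range (k + 1), P.coeff i * u ^ (k - i) = 0 := by
    ext1
    rw [eval_eq_sum_range' (n := k + 1) (by rw [hP.natDegree_map]; omega)] at hy
    have h2 : (y⁻¹) ^ k * ∑ i ∈ Finset.range (k + 1), (P.map OO.subtype).coeff i * y ^ i = 0 := by
      rw [hy, mul_zero]
    rw [Finset.mul_sum] at h2
    simp only [AddSubmonoidClass.coe_finsetSum, Subring.coe_mul, Subring.coe_pow, Subring.coe_zero]
    rw [← h2]
    refine Finset.sum_congr rfl fun i hi => ?_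
    have hik : i ≤ k := by simpa [Nat.lt_succ_iff] using hi
    obtain ⟨m, hm⟩ := Nat.exists_eq_add_of_le hik
    rw [hm, Nat.add_sub_cancel_left, coeff_map, pow_add]
    simp only [u, Subring.subtype_apply]
    rw [inv_pow y i]
    field_simp
  have h3 := congrArg res key
  rw [Finset.sum_range_succ, map_add, map_sum, Finset.sum_eq_zero] at h3
  · have h1 : P.coeff k = 1 := hP
    simp [h1] at h3
  · intro i hi
    rw [map_mul, h i (by simpa using hi), zero_mul]

lemma exists_unit_root (f : OO[X]) (i j : ℕ) (hij : i ≠ j) (hi : res (f.coeff i) ≠ 0)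
    (hj : res (f.coeff j) ≠ 0) :
    ∃ s : KK, s ≠ 0 ∧ s.order = 0 ∧ (f.map OO.subtype).eval s = 0 := by
  obtain ⟨c, hc0, hc⟩ := exists_ne_zero_root (f.map res) i j hij (by rwa [coeff_map])
    (by rwa [coeff_map])
  have hf : f.map res ≠ 0 := by
    intro h; apply hi; rw [← coeff_map, h, coeff_zero]
  obtain ⟨P, hP1, hP2, ⟨Q, hQ⟩, hP4⟩ := exists_factor_root f hf c
  have hpos : 0 < P.natDegree := by
    rw [hP2]; exact (rootMultiplicity_pos hf).2 hc
  obtain ⟨y, hy⟩ := exists_root_aux P.natDegree (P.map OO.subtype) (hP1.map _)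
      (hP1.natDegree_map _) hpos
  have hyp := root_pos P hP1 hP4 y hy
  let Y : OO := ⟨y, hyp.le⟩
  have hres : res (Y + cst c) = c := by
    rw [map_add, res_cst, (res_eq_zero_iff Y).2 hyp, zero_add]
  have h0 : ((Y + cst c : OO) : KK) ≠ 0 := by
    intro h; apply hc0; rw [← hres, res_apply, h]; simp
  refine ⟨((Y + cst c : OO) : KK), h0, ?_, ?_⟩
  · have h1 : ((Y + cst c : OO) : KK).orderTop = 0 := by
      refine le_antisymm ?_ (Y + cst c).2
      rw [← not_lt, ← res_eq_zero_iff, hres]; exact hc0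
    rw [← HahnSeries.order_eq_orderTop_of_ne_zero h0] at h1
    exact_mod_cast h1
  · have : (f.map OO.subtype).eval (y + OO.subtype (cst c)) = 0 := by
      rw [← taylor_eval, ← map_taylor, hQ, Polynomial.map_mul, eval_mul, hy, zero_mul]
    exact this

/-- The order as a homomorphism. -/
noncomputable def ordHom : KKˣ →* Multiplicative ℝ where
  toFun u := Multiplicative.ofAdd (u : KK).order
  map_one' := by simp
  map_mul' u v := by
    rw [Units.val_mul, HahnSeries.order_mul u.ne_zero v.ne_zero]; rfl

lemma order_zpow {x : KK} (hx : x ≠ 0) (m : ℤ) : (x ^ m).order = m * x.order := by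
  have := map_zpow ordHom (Units.mk0 x hx) m
  have := congrArg Multiplicative.toAdd this
  simpa [ordHom] using this

lemma order_prod {ι : Type*} (s : Finset ι) (z : ι → KK) (hz : ∀ j, z j ≠ 0) :
    (∏ j ∈ s, z j).order = ∑ j ∈ s, (z j).order := by
  classical
  induction s using Finset.induction_on with
  | empty => simp
  | insert j s hj ih =>
    rw [Finset.prod_insert hj, Finset.sum_insert hj, HahnSeries.order_mul (hz j)
      (Finset.prod_ne_zero_iff.2 fun i _ => hz i), ih]

lemma exists_dir (n : ℕ) (A : Finset (Fin n → ℤ)) :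
    ∃ m : Fin n → ℤ, ∀ α ∈ A, ∀ β ∈ A, ∑ j, α j * m j = ∑ j, β j * m j → α = β := by
  classical
  let F : (Fin n → ℤ) → ℤ[X] := fun v => ∑ j : Fin n, C (v j) * X ^ (j : ℕ)
  have hF : ∀ v, v ≠ 0 → F v ≠ 0 := by
    intro v hv h
    apply hv
    funext j
    have := congrArg (fun p => coeff p (j : ℕ)) h
    simp only [F, finsetSum_coeff, coeff_C_mul_X_pow, coeff_zero] at this
    rw [Finset.sum_eq_single j] at this
    · simpa using this
    · intro b _ hb
      rw [if_neg]; intro h; exact hb (Fin.ext h.symm)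
    · simp
  let G : ℤ[X] := ∏ p ∈ (A ×ˢ A).filter (fun p => p.1 ≠ p.2), F (p.1 - p.2)
  have hG : G ≠ 0 := by
    refine Finset.prod_ne_zero_iff.2 fun p hp => hF _ ?_
    simp only [Finset.mem_filter] at hp
    exact sub_ne_zero.2 hp.2
  obtain ⟨b, hb⟩ : ∃ b, G.eval b ≠ 0 := by
    by_contra! h
    exact hG (Polynomial.funext (by simpa using h))
  refine ⟨fun j => b ^ (j : ℕ), fun α hα β hβ h => ?_⟩
  by_contra hne
  rw [eval_prod, Finset.prod_ne_zero_iff] at hb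
  apply hb (α, β) (by simp [hα, hβ, hne])
  simp only [F, eval_finsetSum, eval_mul, eval_C, eval_pow, eval_X, Pi.sub_apply, sub_mul,
    Finset.sum_sub_distrib, h, sub_self]

lemma forward (n : ℕ) (A : Finset (Fin n → ℤ)) (hA : A.Nonempty)
    (a : (Fin n → ℤ) → KK) (ha : ∀ α ∈ A, a α ≠ 0) (x : Fin n → ℝ) (z : Fin n → KK)
    (hz : ∀ j, z j ≠ 0) (hs : (∑ α ∈ A, a α * ∏ j, z j ^ (α j)) = 0)
    (hx : ∀ j, x j = -(z j).order) :
    ∃ α ∈ A, ∃ β ∈ A, α ≠ β ∧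
          (-(a α).order + ∑ j, (α j : ℝ) * x j
            = A.sup' hA fun γ => -(a γ).order + ∑ j, (γ j : ℝ) * x j) ∧
          (-(a β).order + ∑ j, (β j : ℝ) * x j
            = A.sup' hA fun γ => -(a γ).order + ∑ j, (γ j : ℝ) * x j) := by
  have hne : ∀ α ∈ A, a α * ∏ j, z j ^ (α j) ≠ 0 := fun α hα =>
    mul_ne_zero (ha α hα) (Finset.prod_ne_zero_iff.2 fun j _ => zpow_ne_zero _ (hz j))
  have hord : ∀ α ∈ A, -(a α).order + ∑ j, (α j : ℝ) * x j
      = -(a α * ∏ j, z j ^ (α j)).order := by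
    intro α hα
    rw [HahnSeries.order_mul (ha α hα) (right_ne_zero_of_mul (hne α hα)),
      order_prod _ _ (fun j => zpow_ne_zero _ (hz j)), neg_add, ← Finset.sum_neg_distrib]
    congr 1
    refine Finset.sum_congr rfl fun j _ => ?_
    rw [order_zpow (hz j), hx j]; ring
  set φ : (Fin n → ℤ) → ℝ := fun γ => -(a γ).order + ∑ j, (γ j : ℝ) * x j with hφ
  obtain ⟨α, hα, hmax⟩ := Finset.exists_mem_eq_sup' hA φ
  by_contra hcon
  have hlt : ∀ β ∈ A, β ≠ α → φ β < φ α := by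
    intro β hβ hβα
    refine lt_of_le_of_ne (hmax ▸ Finset.le_sup' φ hβ) fun h => ?_
    exact hcon ⟨α, hα, β, hβ, hβα.symm, hmax.symm, by rw [hmax]; exact h⟩
  have hc := congrArg (fun s : KK => s.coeff (a α * ∏ j, z j ^ (α j)).order) hs
  simp only [HahnSeries.coeff_sum, HahnSeries.coeff_zero] at hc
  rw [Finset.sum_eq_single_of_mem α hα] at hc
  · exact hne α hα (HahnSeries.coeff_order_eq_zero.1 hc)
  · intro β hβ hβα
    apply HahnSeries.coeff_eq_zero_of_lt_order
    have := hlt β hβ hβα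
    have e1 : φ β = _ := hord β hβ
    have e2 : φ α = _ := hord α hα
    linarith

lemma backward (n : ℕ) (A : Finset (Fin n → ℤ)) (hA : A.Nonempty)
    (a : (Fin n → ℤ) → KK) (ha : ∀ α ∈ A, a α ≠ 0) (x : Fin n → ℝ)
    (α : Fin n → ℤ) (hα : α ∈ A) (β : Fin n → ℤ) (hβ : β ∈ A) (hαβ : α ≠ β)
    (h1 : -(a α).order + ∑ j, (α j : ℝ) * x j
            = A.sup' hA fun γ => -(a γ).order + ∑ j, (γ j : ℝ) * x j)
    (h2 : -(a β).order + ∑ j, (β j : ℝ) * x j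
            = A.sup' hA fun γ => -(a γ).order + ∑ j, (γ j : ℝ) * x j) :
    ∃ z : Fin n → KK, (∀ j, z j ≠ 0) ∧ (∑ α ∈ A, a α * ∏ j, z j ^ (α j)) = 0 ∧
        ∀ j, x j = -(z j).order := by
  classical
  set φ : (Fin n → ℤ) → ℝ := fun γ => -(a γ).order + ∑ j, (γ j : ℝ) * x j with hφ
  set M := A.sup' hA φ with hM
  obtain ⟨m, hm⟩ := exists_dir n A
  let e : (Fin n → ℤ) → ℤ := fun γ => ∑ j, γ j * m j
  obtain ⟨N, hN⟩ : ∃ N : ℤ, ∀ γ ∈ A, 0 ≤ e γ + N := by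
    refine ⟨∑ γ ∈ A, |e γ|, fun γ hγ => ?_⟩
    have := Finset.single_le_sum (f := fun γ => |e γ|) (fun i _ => abs_nonneg _) hγ
    have h3 := neg_abs_le (e γ)
    linarith
  let t : ℝ → KK := fun r => HahnSeries.single r 1
  have ht0 : ∀ r, t r ≠ 0 := fun r => HahnSeries.single_ne_zero one_ne_zero
  have htadd : ∀ r s, t (r + s) = t r * t s := fun r s => by
    simp [t, HahnSeries.single_mul_single]
  let b : (Fin n → ℤ) → KK := fun γ => a γ * t (M - ∑ j, (γ j : ℝ) * x j)
  have hbo : ∀ γ ∈ A, (b γ).orderTop = ((M - φ γ : ℝ) : WithTop ℝ) := by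
    intro γ hγ
    rw [HahnSeries.orderTop_mul, ← HahnSeries.order_eq_orderTop_of_ne_zero (ha γ hγ),
      HahnSeries.orderTop_single one_ne_zero, ← WithTop.coe_add]
    congr 1
    simp only [hφ]; ring
  have hbO : ∀ γ ∈ A, b γ ∈ OO := by
    intro γ hγ
    rw [mem_OO, hbo γ hγ]
    have := Finset.le_sup' φ hγ
    have : 0 ≤ M - φ γ := by rw [← hM] at this; linarith
    exact_mod_cast this
  let B : (Fin n → ℤ) → OO := fun γ => if h : γ ∈ A then ⟨b γ, hbO γ h⟩ else 0
  have hB : ∀ γ ∈ A, (B γ : KK) = b γ := fun γ hγ => by simp [B, hγ]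
  let f : OO[X] := ∑ γ ∈ A, C (B γ) * X ^ (e γ + N).toNat
  have hcoef : ∀ γ ∈ A, f.coeff (e γ + N).toNat = B γ := by
    intro γ hγ
    simp only [f, finsetSum_coeff, coeff_C_mul_X_pow]
    rw [Finset.sum_eq_single_of_mem γ hγ]
    · simp
    · intro δ hδ hne
      rw [if_neg]
      intro h
      apply hne
      apply hm δ hδ γ hγ
      have h3 := hN γ hγ
      have h4 := hN δ hδ
      change e δ = e γ
      omega
  have hresB : ∀ γ ∈ A, φ γ = M → res (B γ) ≠ 0 := by
    intro γ hγ h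
    rw [Ne, res_eq_zero_iff, hB γ hγ, hbo γ hγ, h]
    simp
  obtain ⟨s, hs0, hs, hsf⟩ := exists_unit_root f (e α + N).toNat (e β + N).toNat (by
      intro h
      apply hαβ
      apply hm α hα β hβ
      have h3 := hN α hα
      have h4 := hN β hβ
      change e α = e β
      omega) (by rw [hcoef α hα]; exact hresB α hα h1) (by rw [hcoef β hβ]; exact hresB β hβ h2)
  have hz0 : ∀ j, t (-x j) * s ^ m j ≠ 0 := fun j => mul_ne_zero (ht0 _) (zpow_ne_zero _ hs0)
  refine ⟨fun j => t (-x j) * s ^ m j, hz0, ?_, fun j => ?_⟩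
  · have hzp : ∀ (r : ℝ) (k : ℤ), t r ^ k = t (k * r) := by
      intro r k
      have : ∀ k : ℕ, t r ^ k = t (k * r) := fun k => by
        simp [t, HahnSeries.single_pow]
      obtain ⟨k, rfl | rfl⟩ := k.eq_nat_or_neg
      · simpa using this k
      · rw [zpow_neg, zpow_natCast, this]
        refine inv_eq_of_mul_eq_one_left ?_
        rw [← htadd]
        push_cast
        simp [t]
    have hprod : ∀ γ : Fin n → ℤ, ∏ j, (t (-x j) * s ^ m j) ^ γ j
        = t (-∑ j, (γ j : ℝ) * x j) * s ^ (e γ) := by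
      intro γ
      have hts : ∀ S : Finset (Fin n), ∏ j ∈ S, (t (-x j) * s ^ m j) ^ γ j
        = t (-∑ j ∈ S, (γ j : ℝ) * x j) * s ^ (∑ j ∈ S, γ j * m j) := by
        intro S
        induction S using Finset.induction_on with
        | empty => simp [t]
        | insert j S hj ih =>
          rw [Finset.prod_insert hj, Finset.sum_insert hj, Finset.sum_insert hj, ih, neg_add, htadd,
            zpow_add₀ hs0, mul_zpow, hzp, ← zpow_mul, mul_comm (m j), mul_neg]
          ring
      exact hts _
    have h3 : t M * s ^ N * ∑ γ ∈ A, a γ * ∏ j, (t (-x j) * s ^ m j) ^ γ j = 0 := by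
      rw [← hsf]
      simp only [f, Polynomial.map_sum, Polynomial.map_mul, map_C, Polynomial.map_pow, map_X,
        eval_finsetSum, eval_mul, eval_C, eval_pow, eval_X, Subring.subtype_apply]
      rw [Finset.mul_sum]
      refine Finset.sum_congr rfl fun γ hγ => ?_
      rw [hB γ hγ, hprod, ← zpow_natCast, Int.toNat_of_nonneg (hN γ hγ), zpow_add₀ hs0]
      simp only [b]
      rw [sub_eq_add_neg, htadd]
      ring
    exact (mul_eq_zero.1 h3).resolve_left (mul_ne_zero (ht0 _) (zpow_ne_zero _ hs0))
  · rw [HahnSeries.order_mul (ht0 _) (zpow_ne_zero _ hs0), order_zpow hs0, hs,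
      HahnSeries.order_single one_ne_zero]
    ring

end KapranovAux

/-- **Theorem 2.3 (Kapranov).** Over the field `𝕂` of generalized Puiseux (Hahn)
series with real exponents and valuation `val(a) = −min(supp a)`, the closure in
`ℝⁿ` of the image under the coordinatewise valuation of the hypersurface
`{g = 0} ⊆ (𝕂*)ⁿ` equals the tropical hypersurface of `g`: the set of points where
the maximum `max_{α∈A}(val(a_α) + ⟨α, x⟩)` is attained at least twice. -/
theorem kapranov_tropicalization
    (n : ℕ) (A : Finset (Fin n → ℤ)) (hA : A.Nonempty)
    (a : (Fin n → ℤ) → HahnSeries ℝ ℂ) (ha : ∀ α ∈ A, a α ≠ 0) :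
    closure {x : Fin n → ℝ | ∃ z : Fin n → HahnSeries ℝ ℂ,
        (∀ j, z j ≠ 0) ∧ (∑ α ∈ A, a α * ∏ j, z j ^ (α j)) = 0 ∧
        ∀ j, x j = -(z j).order}
      = {x : Fin n → ℝ | ∃ α ∈ A, ∃ β ∈ A, α ≠ β ∧
          (-(a α).order + ∑ j, (α j : ℝ) * x j
            = A.sup' hA fun γ => -(a γ).order + ∑ j, (γ j : ℝ) * x j) ∧
          (-(a β).order + ∑ j, (β j : ℝ) * x j
            = A.sup' hA fun γ => -(a γ).order + ∑ j, (γ j : ℝ) * x j)} := by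
  have hset : {x : Fin n → ℝ | ∃ z : Fin n → HahnSeries ℝ ℂ,
        (∀ j, z j ≠ 0) ∧ (∑ α ∈ A, a α * ∏ j, z j ^ (α j)) = 0 ∧
        ∀ j, x j = -(z j).order}
      = {x : Fin n → ℝ | ∃ α ∈ A, ∃ β ∈ A, α ≠ β ∧
          (-(a α).order + ∑ j, (α j : ℝ) * x j
            = A.sup' hA fun γ => -(a γ).order + ∑ j, (γ j : ℝ) * x j) ∧
          (-(a β).order + ∑ j, (β j : ℝ) * x j
            = A.sup' hA fun γ => -(a γ).order + ∑ j, (γ j : ℝ) * x j)} := by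
    ext x
    constructor
    · rintro ⟨z, hz, hs, hx⟩
      exact KapranovAux.forward n A hA a ha x z hz hs hx
    · rintro ⟨α, hα, β, hβ, hαβ, h1, h2⟩
      exact KapranovAux.backward n A hA a ha x α hα β hβ hαβ h1 h2
  rw [hset]
  apply IsClosed.closure_eq
  have hlin : ∀ γ : Fin n → ℤ,
      Continuous fun x : Fin n → ℝ => -(a γ).order + ∑ j, (γ j : ℝ) * x j := by
    intro γ; fun_prop
  have hsup : Continuous fun x : Fin n → ℝ =>
      A.sup' hA fun γ => -(a γ).order + ∑ j, (γ j : ℝ) * x j :=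
    Continuous.finset_sup'_apply hA fun γ _ => hlin γ
  have heq : {x : Fin n → ℝ | ∃ α ∈ A, ∃ β ∈ A, α ≠ β ∧
          (-(a α).order + ∑ j, (α j : ℝ) * x j
            = A.sup' hA fun γ => -(a γ).order + ∑ j, (γ j : ℝ) * x j) ∧
          (-(a β).order + ∑ j, (β j : ℝ) * x j
            = A.sup' hA fun γ => -(a γ).order + ∑ j, (γ j : ℝ) * x j)}
      = ⋃ α ∈ A, ⋃ β ∈ A, {x | α ≠ β ∧
          (-(a α).order + ∑ j, (α j : ℝ) * x j
            = A.sup' hA fun γ => -(a γ).order + ∑ j, (γ j : ℝ) * x j) ∧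
          (-(a β).order + ∑ j, (β j : ℝ) * x j
            = A.sup' hA fun γ => -(a γ).order + ∑ j, (γ j : ℝ) * x j)} := by
    ext x
    simp only [Set.mem_iUnion, Set.mem_ofPred_eq, exists_prop]
  rw [heq]
  refine isClosed_biUnion_finset fun α _ => isClosed_biUnion_finset fun β _ => ?_
  exact isClosed_const.and ((isClosed_eq (hlin α) hsup).and (isClosed_eq (hlin β) hsup))
end
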